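/- arXiv:1906.08997 — 9 statements merged into one kernel-verified Lean document; each statement's English description precedes it below -/
import Mathlib

section
/- Let ρ_AB be a bipartite density matrix on ℂ^{d_A}⊗ℂ^{d_B} and let {M_μ} be a POVM on ℂ^{d_A} all of whose elements are diagonal (an incoherent measurement). Set p^{M_μ} = tr((M_μ⊗1)ρ_AB) and ρ_{B|M_μ} = tr_A((M_μ⊗1)ρ_AB)/p^{M_μ}. Then Σ_μ p^{M_μ} S(ρ_{B|M_μ}) ≥ Σ_{i=0}^{d_A−1} p_i S(ρ_{B|i}), where terms with vanishing probability are omitted. -/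
open Matrix Kronecker BigOperators
open scoped ComplexOrder

noncomputable section

/-- The completely dephasing map `Δ`: keeps only the diagonal entries. -/
def deph {n : Type*} [DecidableEq n] (M : Matrix n n ℂ) : Matrix n n ℂ :=
  Matrix.of fun i j => if i = j then M i j else 0

/-- A density matrix: positive semidefinite with unit trace. -/
def IsDensityMatrix {n : Type*} [Fintype n] (ρ : Matrix n n ℂ) : Prop :=
  ρ.PosSemidef ∧ ρ.trace = 1

/-- Von Neumann entropy (base 2): `S(ρ) = -∑ λ_k log₂ λ_k`. -/
def vnEntropy {n : Type*} [Fintype n] [DecidableEq n] (ρ : Matrix n n ℂ) : ℝ :=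
  if h : ρ.IsHermitian then -∑ k, h.eigenvalues k * Real.logb 2 (h.eigenvalues k) else 0

/-- Partial trace over the second factor: `ρ_A = tr_B ρ_AB`. -/
def ptrB {A B : Type*} [Fintype B] (ρ : Matrix (A × B) (A × B) ℂ) : Matrix A A ℂ :=
  Matrix.of fun a a' => ∑ b, ρ (a, b) (a', b)

/-- Partial trace over the first factor: `ρ_B = tr_A ρ_AB`. -/
def ptrA {A B : Type*} [Fintype A] (ρ : Matrix (A × B) (A × B) ℂ) : Matrix B B ℂ :=
  Matrix.of fun b b' => ∑ a, ρ (a, b) (a, b')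

/-- `p_i = tr((|i⟩⟨i|⊗1) ρ_AB)`. -/
def probA {A B : Type*} [Fintype B] (ρ : Matrix (A × B) (A × B) ℂ) (i : A) : ℝ :=
  (∑ b, ρ (i, b) (i, b)).re

/-- `ρ_{B|i} = tr_A((|i⟩⟨i|⊗1) ρ_AB) / p_i`. -/
def condB {A B : Type*} [Fintype B] (ρ : Matrix (A × B) (A × B) ℂ) (i : A) :
    Matrix B B ℂ :=
  ((probA ρ i : ℝ) : ℂ)⁻¹ • Matrix.of fun b b' => ρ (i, b) (i, b')

/-- Quantum discord based on incoherent measurement: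
`D_{B|A}(ρ) = ∑ᵢ pᵢ S(ρ_{B|i}) + S(ρ_A) − S(ρ_AB)`. -/
def QDI {A B : Type*} [Fintype A] [Fintype B] [DecidableEq A] [DecidableEq B]
    (ρ : Matrix (A × B) (A × B) ℂ) : ℝ :=
  (∑ i, probA ρ i * vnEntropy (condB ρ i)) + vnEntropy (ptrB ρ) - vnEntropy ρ

/-- Dephasing on the first subsystem: `Δ_A ⊗ id`. -/
def dephA {A B : Type*} [DecidableEq A] (ρ : Matrix (A × B) (A × B) ℂ) :
    Matrix (A × B) (A × B) ℂ :=
  Matrix.of fun p q => if p.1 = q.1 then ρ p q else 0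

/-- Dephasing on the second subsystem: `id ⊗ Δ_B`. -/
def dephB {A B : Type*} [DecidableEq B] (ρ : Matrix (A × B) (A × B) ℂ) :
    Matrix (A × B) (A × B) ℂ :=
  Matrix.of fun p q => if p.2 = q.2 then ρ p q else 0

/-- Trace out the last system of a tripartite state on `A × (B × B')`, leaving `A × B`. -/
def ptrB2 {A B B' : Type*} [Fintype B'] (ρ : Matrix (A × B × B') (A × B × B') ℂ) :
    Matrix (A × B) (A × B) ℂ :=
  Matrix.of fun p q => ∑ c, ρ (p.1, p.2, c) (q.1, q.2, c)

/-- Trace out the middle system of a tripartite state on `A × (B × B')`, leaving `A × B'`. -/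
def ptrB1 {A B B' : Type*} [Fintype B] (ρ : Matrix (A × B × B') (A × B × B') ℂ) :
    Matrix (A × B') (A × B') ℂ :=
  Matrix.of fun p q => ∑ b, ρ (p.1, b, p.2) (q.1, b, q.2)

/-- The outcome probability `p^{M_μ} = tr((M_μ ⊗ 1) ρ_AB)` of a measurement on `A`. -/
def pMeas {dA dB m : ℕ} (ρ : Matrix (Fin dA × Fin dB) (Fin dA × Fin dB) ℂ)
    (M : Fin m → Matrix (Fin dA) (Fin dA) ℂ) (μ : Fin m) : ℝ :=
  (((M μ ⊗ₖ (1 : Matrix (Fin dB) (Fin dB) ℂ)) * ρ).trace).re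

/-- The conditional state `ρ_{B|M_μ} = tr_A((M_μ ⊗ 1) ρ_AB) / p^{M_μ}`. -/
def condMeas {dA dB m : ℕ} (ρ : Matrix (Fin dA × Fin dB) (Fin dA × Fin dB) ℂ)
    (M : Fin m → Matrix (Fin dA) (Fin dA) ℂ) (μ : Fin m) : Matrix (Fin dB) (Fin dB) ℂ :=
  ((pMeas ρ M μ : ℝ) : ℂ)⁻¹ • ptrA ((M μ ⊗ₖ (1 : Matrix (Fin dB) (Fin dB) ℂ)) * ρ)

lemma vnEntropy_eq_aux {n : Type*} [Fintype n] [DecidableEq n] (ρ : Matrix n n ℂ)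
    (h : ρ.IsHermitian) :
    vnEntropy ρ = (∑ k, Real.negMulLog (h.eigenvalues k)) / Real.log 2 := by
  unfold vnEntropy
  rw [dif_pos h, Finset.sum_div, ← Finset.sum_neg_distrib]
  refine Finset.sum_congr rfl fun k _ => ?_
  simp only [Real.negMulLog, Real.logb]
  ring

/-- The entropy is at most the Shannon entropy of the diagonal in any orthonormal basis. -/
lemma entropy_le_diag_aux {n : Type*} [Fintype n] [DecidableEq n] (ρ : Matrix n n ℂ)
    (h : ρ.PosSemidef) (U : Matrix n n ℂ) (hU1 : star U * U = 1) (hU2 : U * star U = 1) :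
    vnEntropy ρ ≤ (∑ k, Real.negMulLog ((star U * ρ * U) k k).re) / Real.log 2 := by
  rw [vnEntropy_eq_aux ρ h.isHermitian]
  refine div_le_div_of_nonneg_right ?_ (Real.log_nonneg (by norm_num))
  set V : Matrix n n ℂ := (h.isHermitian.eigenvectorUnitary : Matrix n n ℂ) with hV
  have hV1 : star V * V = 1 := Unitary.coe_star_mul_self _
  have hV2 : V * star V = 1 := Unitary.coe_mul_star_self _
  set l := h.isHermitian.eigenvalues with hl
  have hl0 : ∀ j, 0 ≤ l j := h.eigenvalues_nonneg
  have hspec : ρ = V * diagonal (fun j => (l j : ℂ)) * star V := by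
    have := h.isHermitian.spectral_theorem
    rw [Unitary.conjStarAlgAut_apply] at this
    exact this
  set W := star U * V with hW
  have hWs : star W = star V * U := by simp [hW]
  have hW1 : star W * W = 1 := by
    rw [hWs, hW]
    calc star V * U * (star U * V) = star V * (U * star U) * V := by simp only [Matrix.mul_assoc]
      _ = 1 := by rw [hU2, Matrix.mul_one, hV1]
  have hW2 : W * star W = 1 := by
    rw [hWs, hW]
    calc star U * V * (star V * U) = star U * (V * star V) * U := by simp only [Matrix.mul_assoc]
      _ = 1 := by rw [hV2, Matrix.mul_one, hU1]
  have hd : star U * ρ * U = W * diagonal (fun j => (l j : ℂ)) * star W := by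
    rw [hWs, hW]
    conv_lhs => rw [hspec]
    simp only [Matrix.mul_assoc]
  have hdiag : ∀ k, ((star U * ρ * U) k k).re = ∑ j, Complex.normSq (W k j) • l j := by
    intro k
    rw [hd, Matrix.mul_apply, Complex.re_sum]
    refine Finset.sum_congr rfl fun j _ => ?_
    rw [Matrix.mul_diagonal, Matrix.star_apply]
    simp [Complex.normSq_apply]
    ring
  have hrow : ∀ k, ∑ j, Complex.normSq (W k j) = 1 := by
    intro k
    have := congrArg Complex.re (congrFun (congrFun hW2 k) k)
    rw [Matrix.mul_apply, Complex.re_sum] at this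
    simpa [Matrix.star_apply, Complex.normSq_apply] using this
  have hcol : ∀ j, ∑ k, Complex.normSq (W k j) = 1 := by
    intro j
    have := congrArg Complex.re (congrFun (congrFun hW1 j) j)
    rw [Matrix.mul_apply, Complex.re_sum] at this
    simpa [Matrix.star_apply, Complex.normSq_apply] using this
  calc ∑ j, Real.negMulLog (l j)
      = ∑ j, (∑ k, Complex.normSq (W k j)) * Real.negMulLog (l j) := by simp [hcol]
    _ = ∑ k, ∑ j, Complex.normSq (W k j) • Real.negMulLog (l j) := by
        simp_rw [Finset.sum_mul, smul_eq_mul]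
        exact Finset.sum_comm
    _ ≤ _ := by
        refine Finset.sum_le_sum fun k _ => ?_
        rw [hdiag]
        exact Real.concaveOn_negMulLog.le_map_sum (fun j _ => Complex.normSq_nonneg _) (hrow k)
          (fun j _ => hl0 j)

/-- Concavity of the von Neumann entropy. -/
lemma entropy_concave_aux {n ι : Type*} [Fintype n] [DecidableEq n] [Fintype ι]
    (w : ι → ℝ) (hw : ∀ i, 0 ≤ w i) (hw1 : ∑ i, w i = 1) (ρ : ι → Matrix n n ℂ)
    (h : ∀ i, (ρ i).PosSemidef) :
    ∑ i, w i * vnEntropy (ρ i) ≤ vnEntropy (∑ i, (w i : ℂ) • ρ i) := by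
  have hτ : (∑ i, (w i : ℂ) • ρ i).PosSemidef :=
    posSemidef_sum _ fun i _ => (h i).smul (by exact_mod_cast hw i)
  set τ := ∑ i, (w i : ℂ) • ρ i with hτd
  set U : Matrix n n ℂ := (hτ.isHermitian.eigenvectorUnitary : Matrix n n ℂ) with hU
  have hU1 : star U * U = 1 := Unitary.coe_star_mul_self _
  have hU2 : U * star U = 1 := Unitary.coe_mul_star_self _
  have hspec : τ = U * diagonal (fun j => (hτ.isHermitian.eigenvalues j : ℂ)) * star U := by
    have := hτ.isHermitian.spectral_theorem
    rw [Unitary.conjStarAlgAut_apply] at this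
    exact this
  have hD : star U * τ * U = diagonal (fun j => (hτ.isHermitian.eigenvalues j : ℂ)) := by
    conv_lhs => rw [hspec]
    calc _ = (star U * U) * diagonal (fun j => (hτ.isHermitian.eigenvalues j : ℂ))
          * (star U * U) := by simp only [Matrix.mul_assoc]
      _ = _ := by rw [hU1, Matrix.mul_one, Matrix.one_mul]
  have hev : ∀ k, hτ.isHermitian.eigenvalues k = ∑ i, w i • ((star U * ρ i * U) k k).re := by
    intro k
    have h1 : hτ.isHermitian.eigenvalues k = ((star U * τ * U) k k).re := by
      rw [hD]; simp
    rw [h1, hτd, Matrix.mul_sum, Matrix.sum_mul, Matrix.sum_apply, Complex.re_sum]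
    refine Finset.sum_congr rfl fun i _ => ?_
    simp
  have hlog : 0 ≤ Real.log 2 := Real.log_nonneg (by norm_num)
  calc ∑ i, w i * vnEntropy (ρ i)
      ≤ ∑ i, w i * ((∑ k, Real.negMulLog ((star U * ρ i * U) k k).re) / Real.log 2) :=
        Finset.sum_le_sum fun i _ =>
          mul_le_mul_of_nonneg_left (entropy_le_diag_aux (ρ i) (h i) U hU1 hU2) (hw i)
    _ = (∑ k, ∑ i, w i • Real.negMulLog ((star U * ρ i * U) k k).re) / Real.log 2 := by
        rw [Finset.sum_comm, Finset.sum_div]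
        refine Finset.sum_congr rfl fun i _ => ?_
        simp_rw [smul_eq_mul]
        rw [← Finset.mul_sum, mul_div_assoc]
    _ ≤ _ := by
        rw [vnEntropy_eq_aux τ hτ.isHermitian]
        refine div_le_div_of_nonneg_right (Finset.sum_le_sum fun k _ => ?_) hlog
        rw [hev]
        refine Real.concaveOn_negMulLog.le_map_sum (fun i _ => hw i) hw1 (fun i _ => ?_)
        have := ((h i).conjTranspose_mul_mul_same U).diag_nonneg (i := k)
        exact (Complex.le_def.1 this).1

/-- for any incoherent POVM `{M_μ}` on `A`,
`∑_μ p^{M_μ} S(ρ_{B|M_μ}) ≥ ∑_i p_i S(ρ_{B|i})`. -/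
theorem stmt5 {dA dB m : ℕ} (ρ : Matrix (Fin dA × Fin dB) (Fin dA × Fin dB) ℂ)
    (hρ : IsDensityMatrix ρ)
    (M : Fin m → Matrix (Fin dA) (Fin dA) ℂ)
    (hpos : ∀ μ, (M μ).PosSemidef) (hsum : ∑ μ, M μ = 1)
    (hinc : ∀ μ, deph (M μ) = M μ) :
    ∑ i, probA ρ i * vnEntropy (condB ρ i) ≤
      ∑ μ, pMeas ρ M μ * vnEntropy (condMeas ρ M μ) := by
  set blk : Fin dA → Matrix (Fin dB) (Fin dB) ℂ := fun i =>
    Matrix.of fun b b' => ρ (i, b) (i, b') with hblk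
  have hblkpos : ∀ i, (blk i).PosSemidef := fun i => hρ.1.submatrix (fun b => (i, b))
  have htr : ∀ i, (blk i).trace = ((probA ρ i : ℝ) : ℂ) := by
    intro i
    have h0 := (Complex.le_def.1 (hblkpos i).trace_nonneg).2
    apply Complex.ext
    · simp [probA, Matrix.trace, hblk]
    · rw [← h0]; simp
  have hp : ∀ i, 0 ≤ probA ρ i := by
    intro i
    have h0 := (hblkpos i).trace_nonneg
    rw [htr] at h0
    exact_mod_cast h0
  have hz : ∀ i, probA ρ i = 0 → blk i = 0 := by
    intro i hi
    rw [← (hblkpos i).trace_eq_zero_iff, htr, hi]; simp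
  have hcond : ∀ i, ((probA ρ i : ℝ) : ℂ) • condB ρ i = blk i := by
    intro i
    by_cases hi : probA ρ i = 0
    · rw [hz i hi, hi]; simp
    · have : ((probA ρ i : ℝ) : ℂ) ≠ 0 := by exact_mod_cast hi
      unfold condB
      rw [smul_smul, mul_inv_cancel₀ this, one_smul]
  have hcondpos : ∀ i, (condB ρ i).PosSemidef := by
    intro i
    refine (hblkpos i).smul ?_
    rw [← Complex.ofReal_inv]
    exact_mod_cast inv_nonneg.2 (hp i)
  set q : Fin m → Fin dA → ℝ := fun μ i => (M μ i i).re with hq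
  have hq0 : ∀ μ i, 0 ≤ q μ i := fun μ i => (Complex.le_def.1 ((hpos μ).diag_nonneg (i := i))).1
  have hqM : ∀ μ, M μ = diagonal (fun i => (q μ i : ℂ)) := by
    intro μ
    ext i j
    by_cases hij : i = j
    · subst hij
      rw [diagonal_apply_eq]
      have := (Complex.le_def.1 ((hpos μ).diag_nonneg (i := i))).2
      apply Complex.ext
      · simp [hq]
      · rw [← this]; simp
    · rw [diagonal_apply_ne _ hij, ← hinc μ]
      simp [deph, hij]
  have hqsum : ∀ i, ∑ μ, q μ i = 1 := by
    intro i
    have := congrArg Complex.re (congrFun (congrFun hsum i) i)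
    rw [Matrix.sum_apply, Complex.re_sum] at this
    simpa using this
  have hentry : ∀ μ a b c, ((M μ ⊗ₖ (1 : Matrix (Fin dB) (Fin dB) ℂ)) * ρ) (a, b) c =
      (q μ a : ℂ) * ρ (a, b) c := by
    intro μ a b c
    rw [hqM μ, ← diagonal_one, diagonal_kronecker_diagonal, diagonal_mul]
    simp
  have hptr : ∀ μ, ptrA ((M μ ⊗ₖ (1 : Matrix (Fin dB) (Fin dB) ℂ)) * ρ) =
      ∑ i, (q μ i : ℂ) • blk i := by
    intro μ
    ext b b'
    simp [ptrA, hentry, Matrix.sum_apply, hblk]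
  have hpm : ∀ μ, pMeas ρ M μ = ∑ i, q μ i * probA ρ i := by
    intro μ
    unfold pMeas
    simp only [Matrix.trace, Matrix.diag_apply, Fintype.sum_prod_type, hentry, Complex.re_sum,
      probA, Finset.mul_sum]
    simp
  have key : ∀ μ, ∑ i, q μ i * (probA ρ i * vnEntropy (condB ρ i)) ≤
      pMeas ρ M μ * vnEntropy (condMeas ρ M μ) := by
    intro μ
    have hterm : ∀ i, 0 ≤ q μ i * probA ρ i := fun i => mul_nonneg (hq0 μ i) (hp i)
    have hP0 : 0 ≤ pMeas ρ M μ := by rw [hpm]; exact Finset.sum_nonneg fun i _ => hterm i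
    by_cases hP : pMeas ρ M μ = 0
    · have hall : ∀ i, q μ i * probA ρ i = 0 := by
        intro i
        have h1 := hP
        rw [hpm, Finset.sum_eq_zero_iff_of_nonneg fun i _ => hterm i] at h1
        exact h1 i (Finset.mem_univ i)
      simp [hP, ← mul_assoc, hall]
    · have hPpos : 0 < pMeas ρ M μ := lt_of_le_of_ne hP0 (Ne.symm hP)
      have hc := entropy_concave_aux (fun i => q μ i * probA ρ i / pMeas ρ M μ)
        (fun i => div_nonneg (hterm i) hP0)
        (by rw [← Finset.sum_div, ← hpm, div_self hP]) (condB ρ) hcondpos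
      have hst : ∑ i, ((q μ i * probA ρ i / pMeas ρ M μ : ℝ) : ℂ) • condB ρ i =
          condMeas ρ M μ := by
        unfold condMeas
        rw [hptr, Finset.smul_sum]
        refine Finset.sum_congr rfl fun i _ => ?_
        rw [← hcond i, smul_smul, smul_smul]
        congr 1
        push_cast
        ring
      rw [hst] at hc
      calc _ = pMeas ρ M μ * ∑ i, q μ i * probA ρ i / pMeas ρ M μ * vnEntropy (condB ρ i) := by
            rw [Finset.mul_sum]
            refine Finset.sum_congr rfl fun i _ => ?_
            field_simp
        _ ≤ _ := mul_le_mul_of_nonneg_left hc hP0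
  calc ∑ i, probA ρ i * vnEntropy (condB ρ i)
      = ∑ i, (∑ μ, q μ i) * (probA ρ i * vnEntropy (condB ρ i)) := by simp [hqsum]
    _ = ∑ μ, ∑ i, q μ i * (probA ρ i * vnEntropy (condB ρ i)) := by
        simp_rw [Finset.sum_mul]
        exact Finset.sum_comm
    _ ≤ _ := Finset.sum_le_sum fun μ _ => key μ
end
end

section
/- For every bipartite density matrix ρ_AB on ℂ^{d_A}⊗ℂ^{d_B}, the identity Σ_{i=0}^{d_A−1} p_i S(ρ_{B|i}) + S(ρ_A) − S(ρ_AB) = C_r(ρ_AB) − C_r(ρ_ÃB) − C_r(ρ_A) holds, where ρ_ÃB = (Δ_A⊗id)(ρ_AB), Δ on the bipartite system dephases in the product standard basis, and Δ on system A dephases in the standard basis of ℂ^{d_A}. -/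
open Matrix Kronecker BigOperators
open scoped ComplexOrder

noncomputable section

/-- Relative entropy of coherence `C_r(ρ) = S(Δ(ρ)) − S(ρ)`. -/
def relEntCoh {n : Type*} [Fintype n] [DecidableEq n] (ρ : Matrix n n ℂ) : ℝ :=
  vnEntropy (deph ρ) - vnEntropy ρ

lemma vnEntropy_of_charpoly {n ι : Type*} [Fintype n] [DecidableEq n] [Fintype ι]
    {M : Matrix n n ℂ} (h : M.IsHermitian) (f : ι → ℝ)
    (hc : M.charpoly = ∏ j, (Polynomial.X - Polynomial.C (f j : ℂ))) :
    vnEntropy M = -∑ j, f j * Real.logb 2 (f j) := by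
  have h1 := h.roots_charpoly_eq_eigenvalues
  have h2 : M.charpoly.roots = Multiset.map (fun j => (f j : ℂ)) Finset.univ.val := by
    rw [hc, Polynomial.roots_prod]
    · simp
    · exact Finset.prod_ne_zero_iff.mpr fun j _ => Polynomial.X_sub_C_ne_zero _
  have h3 := congrArg (fun s : Multiset ℂ =>
    (s.map (fun z : ℂ => z.re * Real.logb 2 z.re)).sum) (h1.symm.trans h2)
  simp only [Multiset.map_map, Function.comp_def] at h3
  unfold vnEntropy
  rw [dif_pos h]
  congr 1

lemma charpoly_smul_herm {n : Type*} [Fintype n] [DecidableEq n]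
    {M : Matrix n n ℂ} (h : M.IsHermitian) (c : ℝ) :
    ((c : ℂ) • M).charpoly =
      ∏ k, (Polynomial.X - Polynomial.C ((c * h.eigenvalues k : ℝ) : ℂ)) := by
  conv_lhs => rw [h.spectral_theorem, Unitary.conjStarAlgAut_apply, ← smul_mul_assoc,
    ← mul_smul_comm, charpoly_mul_comm, ← mul_assoc]
  rw [← diagonal_smul, Unitary.coe_star_mul_self, one_mul, charpoly_diagonal]
  simp

lemma charpoly_dephA {A B : Type*} [Fintype A] [Fintype B] [DecidableEq A] [DecidableEq B]
    (ρ : Matrix (A × B) (A × B) ℂ) :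
    (dephA ρ).charpoly =
      ∏ i, (Matrix.of fun b b' => ρ (i, b) (i, b') : Matrix B B ℂ).charpoly := by
  unfold Matrix.charpoly
  rw [← det_blockDiagonal, ← det_submatrix_equiv_self (Equiv.prodComm A B)]
  congr 1
  ext ⟨a, b⟩ ⟨a', b'⟩ : 1
  by_cases ha : a = a'
  · subst ha
    by_cases hb : b = b'
    · subst hb
      simp [charmatrix_apply, blockDiagonal_apply, dephA]
    · simp [charmatrix_apply, blockDiagonal_apply, dephA, hb]
  · simp [charmatrix_apply, blockDiagonal_apply, dephA, ha]

lemma deph_eq_diagonal {n : Type*} [DecidableEq n] (M : Matrix n n ℂ) :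
    deph M = diagonal (fun i => M i i) := by
  ext i j
  by_cases h : i = j
  · subst h; simp [deph]
  · simp [deph, h]

lemma deph_dephA {A B : Type*} [DecidableEq A] [DecidableEq B]
    (ρ : Matrix (A × B) (A × B) ℂ) : deph (dephA ρ) = deph ρ := by
  rw [deph_eq_diagonal, deph_eq_diagonal]
  simp [dephA]

lemma block_posSemidef {A B : Type*} 
    {ρ : Matrix (A × B) (A × B) ℂ} (h : ρ.PosSemidef) (i : A) :
    (Matrix.of fun b b' => ρ (i, b) (i, b') : Matrix B B ℂ).PosSemidef :=
  h.submatrix (fun b => (i, b))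

lemma block_sum {A B : Type*} [Fintype B]
    {ρ : Matrix (A × B) (A × B) ℂ} (h : ρ.PosSemidef) (i : A) :
    ∑ b, ρ (i, b) (i, b) = (probA ρ i : ℂ) := by
  have h0 : 0 ≤ ∑ b, ρ (i, b) (i, b) := Finset.sum_nonneg fun b _ => h.diag_nonneg
  rw [Complex.le_def] at h0
  apply Complex.ext
  · simp [probA]
  · simpa using h0.2.symm

lemma block_eq {A B : Type*} [Fintype B] [DecidableEq B]
    {ρ : Matrix (A × B) (A × B) ℂ} (h : ρ.PosSemidef) (i : A) :
    (Matrix.of fun b b' => ρ (i, b) (i, b') : Matrix B B ℂ) = (probA ρ i : ℂ) • condB ρ i := by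
  by_cases hp : probA ρ i = 0
  · have h1 := block_sum h i
    rw [hp] at h1
    rw [hp, Complex.ofReal_zero, zero_smul]
    exact (block_posSemidef h i).trace_eq_zero_iff.mp (by simpa [Matrix.trace] using h1)
  · unfold condB
    rw [smul_inv_smul₀]
    exact_mod_cast hp

lemma condB_herm {A B : Type*} [Fintype B]
    {ρ : Matrix (A × B) (A × B) ℂ} (h : ρ.PosSemidef) (i : A) :
    (condB ρ i).IsHermitian := by
  have h1 := (block_posSemidef h i).isHermitian
  unfold condB
  unfold Matrix.IsHermitian at *
  rw [conjTranspose_smul, h1]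
  simp

lemma block_entropy {A B : Type*} [Fintype B] [DecidableEq B]
    {ρ : Matrix (A × B) (A × B) ℂ} (h : ρ.PosSemidef) (i : A) :
    ∑ k, probA ρ i * (condB_herm h i).eigenvalues k *
        Real.logb 2 (probA ρ i * (condB_herm h i).eigenvalues k) =
      probA ρ i * Real.logb 2 (probA ρ i) - probA ρ i * vnEntropy (condB ρ i) := by
  by_cases hp : probA ρ i = 0
  · simp [hp]
  have ht : ∑ k, (condB_herm h i).eigenvalues k = 1 := by
    have h1 := (condB_herm h i).trace_eq_sum_eigenvalues
    have h2 : (condB ρ i).trace = 1 := by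
      have : (condB ρ i).trace = (probA ρ i : ℂ)⁻¹ * ∑ b, ρ (i, b) (i, b) := by
        simp [condB, Matrix.trace, Finset.mul_sum]
      rw [this, block_sum h i, inv_mul_cancel₀]
      exact_mod_cast hp
    rw [h2] at h1
    have h3 : ((∑ k, (condB_herm h i).eigenvalues k : ℝ) : ℂ) = 1 := by
      rw [h1]; simp
    exact_mod_cast h3
  unfold vnEntropy
  rw [dif_pos (condB_herm h i), mul_neg, sub_neg_eq_add, Finset.mul_sum]
  have : probA ρ i * Real.logb 2 (probA ρ i) =
      ∑ k, probA ρ i * Real.logb 2 (probA ρ i) * (condB_herm h i).eigenvalues k := by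
    rw [← Finset.mul_sum, ht, mul_one]
  rw [this, ← Finset.sum_add_distrib]
  refine Finset.sum_congr rfl fun k _ => ?_
  by_cases hk : (condB_herm h i).eigenvalues k = 0
  · simp [hk]
  · rw [Real.logb_mul hp hk]; ring

lemma dephA_herm {A B : Type*} [DecidableEq A]
    {ρ : Matrix (A × B) (A × B) ℂ} (h : ρ.IsHermitian) : (dephA ρ).IsHermitian := by
  ext p q
  by_cases hpq : p.1 = q.1
  · simpa [dephA, hpq] using h.apply p q
  · simp [dephA, hpq, Ne.symm hpq]

lemma key {A B : Type*} [Fintype A] [Fintype B] [DecidableEq A] [DecidableEq B]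
    {ρ : Matrix (A × B) (A × B) ℂ} (h : ρ.PosSemidef) :
    vnEntropy (dephA ρ) =
      (∑ i, probA ρ i * vnEntropy (condB ρ i)) + vnEntropy (deph (ptrB ρ)) := by
  have hd : deph (ptrB ρ) = diagonal (fun i => (probA ρ i : ℂ)) := by
    rw [deph_eq_diagonal]
    congr 1
    funext i
    exact block_sum h i
  have h1 : vnEntropy (deph (ptrB ρ)) = -∑ i, probA ρ i * Real.logb 2 (probA ρ i) := by
    rw [hd]
    refine vnEntropy_of_charpoly ?_ _ (charpoly_diagonal _)
    exact isHermitian_diagonal_of_self_adjoint _ (by ext i; simp)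
  have h2 := vnEntropy_of_charpoly (dephA_herm h.isHermitian)
    (fun x : A × B => probA ρ x.1 * (condB_herm h x.1).eigenvalues x.2) (by
      rw [charpoly_dephA, Fintype.prod_prod_type]
      refine Finset.prod_congr rfl fun i _ => ?_
      rw [block_eq h i, charpoly_smul_herm (condB_herm h i)])
  rw [h2, h1, Fintype.sum_prod_type]
  simp only [block_entropy h, Finset.sum_sub_distrib]
  ring

/-- `∑ pᵢ S(ρ_{B|i}) + S(ρ_A) − S(ρ_AB) = C_r(ρ_AB) − C_r(ρ_ÃB) − C_r(ρ_A)`,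
where `ρ_ÃB = (Δ_A ⊗ id)(ρ_AB)`. -/
theorem stmt7 {dA dB : ℕ} (ρ : Matrix (Fin dA × Fin dB) (Fin dA × Fin dB) ℂ)
    (hρ : IsDensityMatrix ρ) :
    (∑ i, probA ρ i * vnEntropy (condB ρ i)) + vnEntropy (ptrB ρ) - vnEntropy ρ =
      relEntCoh ρ - relEntCoh (dephA ρ) - relEntCoh (ptrB ρ) := by
  unfold relEntCoh
  rw [deph_dephA, key hρ.1]
  ring
end
end

section
/- Let ρ_AB be a bipartite density matrix on ℂ^{d_A}⊗ℂ^{d_B}, let U_A be an incoherent unitary on ℂ^{d_A} (i.e., U_A|j⟩ = e^{iθ_j}|π(j)⟩ for some permutation π of {0,...,d_A−1} and phases θ_j), and let U_B be any unitary on ℂ^{d_B}. Then D_{B|A}((U_A⊗U_B) ρ_AB (U_A⊗U_B)†) = D_{B|A}(ρ_AB). -/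
open Matrix Kronecker BigOperators
open scoped ComplexOrder

noncomputable section

theorem vnEntropy_conj {n : Type*} [Fintype n] [DecidableEq n] (U M : Matrix n n ℂ)
    (hU : Uᴴ * U = 1) : vnEntropy (U * M * Uᴴ) = vnEntropy M := by
  have hiff : (U * M * Uᴴ).IsHermitian ↔ M.IsHermitian := by
    constructor
    · intro h
      have h2 := isHermitian_conjTranspose_mul_mul U h
      have : Uᴴ * (U * M * Uᴴ) * U = M := by
        calc Uᴴ * (U * M * Uᴴ) * U = (Uᴴ * U) * M * (Uᴴ * U) := by simp only [Matrix.mul_assoc]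
          _ = M := by simp [hU]
      rwa [this] at h2
    · intro h
      exact isHermitian_mul_mul_conjTranspose U h
  unfold vnEntropy
  by_cases h : M.IsHermitian
  · have h' := hiff.2 h
    rw [dif_pos h, dif_pos h']
    have hc : (U * M * Uᴴ).charpoly = M.charpoly := by
      rw [Matrix.charpoly_mul_comm, ← Matrix.mul_assoc, hU, Matrix.one_mul]
    rw [(Matrix.IsHermitian.eigenvalues_eq_eigenvalues_iff h' h).2 hc]
  · rw [dif_neg h, dif_neg (fun h' => h (hiff.1 h'))]

theorem phase_mul_conj (t : ℝ) :
    Complex.exp (Complex.I * (t : ℝ)) * star (Complex.exp (Complex.I * (t : ℝ))) = 1 := by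
  rw [Complex.star_def, ← Complex.exp_conj, ← Complex.exp_add]
  simp

/-- Blocks of the conjugated matrix. -/
theorem conj_block {dA dB : ℕ} (ρ : Matrix (Fin dA × Fin dB) (Fin dA × Fin dB) ℂ)
    (UA : Matrix (Fin dA) (Fin dA) ℂ) (π : Equiv.Perm (Fin dA)) (θ : Fin dA → ℝ)
    (hUA : ∀ a j, UA a j = if a = π j then Complex.exp (Complex.I * (θ j : ℝ)) else 0)
    (UB : Matrix (Fin dB) (Fin dB) ℂ) (i j : Fin dA) (b b' : Fin dB) :
    ((UA ⊗ₖ UB) * ρ * (UA ⊗ₖ UB)ᴴ) (π i, b) (π j, b') =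
      Complex.exp (Complex.I * (θ i : ℝ)) * star (Complex.exp (Complex.I * (θ j : ℝ))) *
      (UB * (Matrix.of fun c c' => ρ (i, c) (j, c')) * UBᴴ) b b' := by
  simp only [Matrix.mul_apply, Fintype.sum_prod_type, Matrix.conjTranspose_apply,
    Matrix.kroneckerMap_apply, hUA, EmbeddingLike.apply_eq_iff_eq, Matrix.of_apply]
  rw [Finset.sum_eq_single j]
  · rw [Finset.mul_sum]
    refine Finset.sum_congr rfl fun c' _ => ?_
    rw [Finset.sum_eq_single i]
    · simp only [if_true, Finset.mul_sum, Finset.sum_mul, star_mul']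
      refine Finset.sum_congr rfl fun c _ => ?_
      ring
    · intro k _ hk
      simp [Ne.symm hk]
    · simp
  · intro k _ hk
    simp [Ne.symm hk]
  · simp

theorem trace_conj_unitary {n : Type*} [Fintype n] [DecidableEq n] (U M : Matrix n n ℂ)
    (hU : Uᴴ * U = 1) : (U * M * Uᴴ).trace = M.trace := by
  rw [Matrix.trace_mul_comm, ← Matrix.mul_assoc, hU, Matrix.one_mul]

/-- QDI is invariant under an incoherent unitary on `A` together with an
arbitrary unitary on `B`. -/
theorem stmt8 {dA dB : ℕ} (ρ : Matrix (Fin dA × Fin dB) (Fin dA × Fin dB) ℂ)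
    (hρ : IsDensityMatrix ρ)
    (UA : Matrix (Fin dA) (Fin dA) ℂ) (π : Equiv.Perm (Fin dA)) (θ : Fin dA → ℝ)
    (hUA : ∀ a j, UA a j = if a = π j then Complex.exp (Complex.I * (θ j : ℝ)) else 0)
    (UB : Matrix (Fin dB) (Fin dB) ℂ)
    (hUB : UB * UBᴴ = 1 ∧ UBᴴ * UB = 1) :
    QDI ((UA ⊗ₖ UB) * ρ * (UA ⊗ₖ UB)ᴴ) = QDI ρ := by
  have hblk := conj_block ρ UA π θ hUA UB
  have hA : UAᴴ * UA = 1 := by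
    ext i j
    simp only [Matrix.mul_apply, Matrix.conjTranspose_apply, hUA, Matrix.one_apply]
    rw [Finset.sum_eq_single (π j)]
    · by_cases hij : i = j
      · subst hij
        simp only [if_true]
        rw [mul_comm]
        exact phase_mul_conj _
      · have : π j ≠ π i := fun h => hij (π.injective h).symm
        simp [this, hij]
    · intro k _ hk
      simp [hk]
    · simp
  have hAB : (UA ⊗ₖ UB)ᴴ * (UA ⊗ₖ UB) = 1 := by
    rw [Matrix.conjTranspose_kronecker, ← Matrix.mul_kronecker_mul, hA, hUB.2,
      Matrix.one_kronecker_one]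
  have htr : ∀ i j : Fin dA, ∑ b, (UB * (Matrix.of fun c c' => ρ (i, c) (j, c')) * UBᴴ) b b
      = ∑ b, ρ (i, b) (j, b) := fun i j =>
    trace_conj_unitary UB (Matrix.of fun c c' => ρ (i, c) (j, c')) hUB.2
  have hentry : ∀ (X : Matrix (Fin dA) (Fin dA) ℂ) (i j : Fin dA),
      (UA * X * UAᴴ) (π i) (π j) = Complex.exp (Complex.I * (θ i : ℝ)) *
        star (Complex.exp (Complex.I * (θ j : ℝ))) * X i j := by
    intro X i j
    simp only [Matrix.mul_apply, Matrix.conjTranspose_apply, hUA,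
      EmbeddingLike.apply_eq_iff_eq]
    rw [Finset.sum_eq_single j]
    · rw [Finset.sum_eq_single i]
      · simp only [if_true]
        ring
      · intro k _ hk
        simp [Ne.symm hk]
      · simp
    · intro k _ hk
      simp [Ne.symm hk]
    · simp
  have hptr : ptrB ((UA ⊗ₖ UB) * ρ * (UA ⊗ₖ UB)ᴴ) = UA * ptrB ρ * UAᴴ := by
    ext a a'
    obtain ⟨i, rfl⟩ := π.surjective a
    obtain ⟨j, rfl⟩ := π.surjective a'
    rw [hentry]
    simp only [ptrB, Matrix.of_apply]
    rw [← htr, Finset.mul_sum]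
    exact Finset.sum_congr rfl fun b _ => hblk i j b b
  have hprob : ∀ i, probA ((UA ⊗ₖ UB) * ρ * (UA ⊗ₖ UB)ᴴ) (π i) = probA ρ i := by
    intro i
    unfold probA
    rw [← htr]
    congr 1
    refine Finset.sum_congr rfl fun b _ => ?_
    rw [hblk, phase_mul_conj, one_mul]
  have hcond : ∀ i, condB ((UA ⊗ₖ UB) * ρ * (UA ⊗ₖ UB)ᴴ) (π i) = UB * condB ρ i * UBᴴ := by
    intro i
    unfold condB
    rw [hprob, Matrix.mul_smul, Matrix.smul_mul]
    congr 1
    ext b b'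
    rw [Matrix.of_apply, hblk, phase_mul_conj, one_mul]
  unfold QDI
  rw [hptr, vnEntropy_conj _ _ hA, vnEntropy_conj _ _ hAB]
  congr 2
  rw [← Equiv.sum_comp π]
  refine Finset.sum_congr rfl fun i _ => ?_
  rw [hprob, hcond, vnEntropy_conj _ _ hUB.2]
end
end

section
/- Let ρ_ABB' be a tripartite density matrix on ℂ^{d_A}⊗ℂ^{d_B}⊗ℂ^{d_B'}. Then D_{BB'|A}(ρ_ABB') ≥ D_{B|A}(tr_{B'} ρ_ABB'), i.e., discarding the subsystem B' on the unmeasured side does not increase the QDI measured on A. -/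
open Matrix Kronecker BigOperators
open scoped ComplexOrder

noncomputable section

lemma analytic_core {ι : Type*} [Fintype ι] (w r s : ι → ℝ) (hr : ∀ i, 0 ≤ r i)
    (hs : ∀ i, 0 ≤ s i) (h0 : ∀ i, s i = 0 → w i * r i = 0)
    (hsum : ∑ i, w i * r i = 0)
    (hF : ∀ t : ℝ, 0 < t → 0 ≤ ∑ i, w i * (r i ^ 2 / (s i + t * r i))) :
    ∑ i, w i * r i * Real.log (s i) ≤ ∑ i, w i * r i * Real.log (r i) := by
  set g : ℝ → ℝ := fun t => ∑ i, w i * r i * Real.log (s i + t * r i) with hg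
  have hcase : ∀ i, w i * r i = 0 ∨ (0 < s i ∧ 0 < r i) := by
    intro i
    rcases (hs i).eq_or_lt with h | h
    · exact Or.inl (h0 i h.symm)
    · rcases (hr i).eq_or_lt with h' | h'
      · left; rw [← h', mul_zero]
      · exact Or.inr ⟨h, h'⟩
  have hmono : MonotoneOn g (Set.Ici 0) := by
    apply monotoneOn_of_deriv_nonneg (convex_Ici 0)
    · apply continuousOn_finsetSum
      intro i _
      rcases hcase i with h | ⟨h1, h2⟩
      · simp only [h, zero_mul]; exact continuousOn_const
      · apply ContinuousOn.mul continuousOn_const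
        apply ContinuousOn.log (by fun_prop)
        intro t ht
        have : 0 ≤ t := ht
        positivity
    · intro t ht
      rw [interior_Ici] at ht
      have ht : 0 < t := ht
      apply DifferentiableAt.differentiableWithinAt
      apply DifferentiableAt.fun_sum
      intro i _
      rcases hcase i with h | ⟨h1, h2⟩
      · simp only [h, zero_mul]; exact differentiableAt_const _
      · apply DifferentiableAt.mul (by fun_prop)
        apply DifferentiableAt.log (by fun_prop)
        positivity
    · intro t ht
      rw [interior_Ici] at ht
      have ht : 0 < t := ht
      have : HasDerivAt g (∑ i, w i * (r i ^ 2 / (s i + t * r i))) t := by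
        apply HasDerivAt.fun_sum
        intro i _
        rcases hcase i with h | ⟨h1, h2⟩
        · have e : w i * (r i ^ 2 / (s i + t * r i)) = 0 := by
            rw [sq, mul_div_assoc, ← mul_assoc, h, zero_mul]
          rw [e]
          simp only [h, zero_mul]; exact hasDerivAt_const _ _
        · have hd : HasDerivAt (fun x : ℝ => s i + x * r i) (r i) t := by
            simpa using ((hasDerivAt_id t).mul_const (r i)).const_add (s i)
          have := (hd.log (by positivity)).const_mul (w i * r i)
          refine this.congr_deriv ?_
          ring
      rw [this.deriv]; exact hF t ht
  have hle : ∀ T : ℝ, 0 < T → ∑ i, w i * r i * Real.log (s i) ≤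
      ∑ i, w i * r i * Real.log (s i * T⁻¹ + r i) := by
    intro T hT
    have h := hmono (Set.mem_Ici.2 le_rfl) (Set.mem_Ici.2 hT.le) hT.le
    simp only [hg, zero_mul, add_zero] at h
    refine h.trans (le_of_eq ?_)
    have : ∀ i, w i * r i * Real.log (s i + T * r i) =
        w i * r i * Real.log (s i * T⁻¹ + r i) + (w i * r i) * Real.log T := by
      intro i
      rcases hcase i with h | ⟨h1, h2⟩
      · simp [h]
      · rw [← mul_add, ← Real.log_mul (by positivity) hT.ne']
        congr 2
        field_simp
    simp_rw [this]
    rw [Finset.sum_add_distrib, ← Finset.sum_mul, hsum, zero_mul, add_zero]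
  have hlim : Filter.Tendsto (fun T : ℝ => ∑ i, w i * r i * Real.log (s i * T⁻¹ + r i))
      Filter.atTop (nhds (∑ i, w i * r i * Real.log (r i))) := by
    apply tendsto_finsetSum
    intro i _
    rcases hcase i with h | ⟨h1, h2⟩
    · simp [h]
    · apply Filter.Tendsto.const_mul
      apply Filter.Tendsto.log _ h2.ne'
      have := (tendsto_inv_atTop_zero (𝕜 := ℝ)).const_mul (s i)
      simpa using this.add_const (r i)
  exact ge_of_tendsto hlim (Filter.eventually_atTop.2 ⟨1, fun T hT => hle T (by linarith)⟩)

/-- The quadratic functional of the variational formula. -/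
def phiFun {m : Type*} [Fintype m] (t : ℝ) (ρ σ X : Matrix m m ℂ) : ℝ :=
  2 * (Xᴴ * ρ).trace.re - (Xᴴ * (σ * X)).trace.re - t * (X * (ρ * Xᴴ)).trace.re

lemma trace_sum_re {m : Type*} [Fintype m] [DecidableEq m] (Y Z : Matrix m m ℂ) (r : m → ℝ) :
    (Yᴴ * (Z * diagonal (fun i => (r i : ℂ)))).trace.re =
      ∑ j, ∑ i, (star (Y j i) * Z j i).re * r i := by
  rw [Finset.sum_comm]
  simp only [trace, diag_apply, mul_apply (M := Yᴴ), conjTranspose_apply, Complex.re_sum]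
  refine Finset.sum_congr rfl fun i _ => Finset.sum_congr rfl fun j _ => ?_
  rw [mul_diagonal, ← mul_assoc, Complex.re_mul_ofReal]

lemma phiFun_eq {m : Type*} [Fintype m] [DecidableEq m] (t : ℝ) (U V Y : Matrix m m ℂ)
    (r s : m → ℝ) (hU : Uᴴ * U = 1) (hV : Vᴴ * V = 1) :
    phiFun t (U * diagonal (fun i => (r i : ℂ)) * Uᴴ) (V * diagonal (fun i => (s i : ℂ)) * Vᴴ)
      (V * Y * Uᴴ) = ∑ j, ∑ i, (2 * (star (Y j i) * (Vᴴ * U) j i).re * r i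
        - (s j + t * r i) * Complex.normSq (Y j i)) := by
  have e1 : ((V * Y * Uᴴ)ᴴ * (U * diagonal (fun i => (r i : ℂ)) * Uᴴ)).trace =
      (Yᴴ * ((Vᴴ * U) * diagonal (fun i => (r i : ℂ)))).trace := by
    have : (V * Y * Uᴴ)ᴴ * (U * diagonal (fun i => (r i : ℂ)) * Uᴴ) =
        U * (Yᴴ * ((Vᴴ * U) * diagonal (fun i => (r i : ℂ))) * Uᴴ) := by
      simp only [conjTranspose_mul, conjTranspose_conjTranspose, mul_assoc]
    rw [this, trace_mul_comm, mul_assoc, hU, mul_one]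
  have e2 : ((V * Y * Uᴴ)ᴴ * ((V * diagonal (fun i => (s i : ℂ)) * Vᴴ) * (V * Y * Uᴴ))).trace =
      (Yᴴᴴ * (Yᴴ * diagonal (fun i => (s i : ℂ)))).trace := by
    have : (V * Y * Uᴴ)ᴴ * ((V * diagonal (fun i => (s i : ℂ)) * Vᴴ) * (V * Y * Uᴴ)) =
        U * (Yᴴ * ((Vᴴ * V) * (diagonal (fun i => (s i : ℂ)) * ((Vᴴ * V) * (Y * Uᴴ))))) := by
      simp only [conjTranspose_mul, conjTranspose_conjTranspose, mul_assoc]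
    rw [this, hV, one_mul, one_mul, trace_mul_comm, conjTranspose_conjTranspose]
    simp only [mul_assoc]
    rw [hU, mul_one, ← mul_assoc, trace_mul_comm]
  have e3 : ((V * Y * Uᴴ) * ((U * diagonal (fun i => (r i : ℂ)) * Uᴴ) * (V * Y * Uᴴ)ᴴ)).trace =
      (Yᴴ * (Y * diagonal (fun i => (r i : ℂ)))).trace := by
    have : (V * Y * Uᴴ) * ((U * diagonal (fun i => (r i : ℂ)) * Uᴴ) * (V * Y * Uᴴ)ᴴ) =
        V * (Y * ((Uᴴ * U) * (diagonal (fun i => (r i : ℂ)) * ((Uᴴ * U) * (Yᴴ * Vᴴ))))) := by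
      simp only [conjTranspose_mul, conjTranspose_conjTranspose, mul_assoc]
    rw [this, hU, one_mul, one_mul, trace_mul_comm]
    simp only [mul_assoc]
    rw [hV, mul_one, ← mul_assoc, trace_mul_comm]
  rw [phiFun, e1, e2, e3, trace_sum_re, trace_sum_re, trace_sum_re]
  rw [Finset.sum_comm (f := fun j i => (star (Yᴴ j i) * Yᴴ j i).re * s i)]
  simp only [Finset.mul_sum, ← Finset.sum_sub_distrib]
  refine Finset.sum_congr rfl fun j _ => Finset.sum_congr rfl fun i _ => ?_
  simp only [conjTranspose_apply, star_star, Complex.normSq_apply, Complex.mul_re,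
    Complex.star_def, Complex.conj_re, Complex.conj_im]
  ring

lemma scalar_le (y c : ℂ) (r s t : ℝ) (hr : 0 ≤ r) (hs : 0 ≤ s) (ht : 0 < t) :
    2 * (star y * c).re * r - (s + t * r) * Complex.normSq y ≤
      Complex.normSq c * (r ^ 2 / (s + t * r)) := by
  rcases hr.eq_or_lt with h | h
  · rw [← h]; simp; exact mul_nonneg hs (Complex.normSq_nonneg _)
  · have hk : 0 < s + t * r := by positivity
    rw [← mul_div_assoc, le_div_iff₀ hk]
    simp only [Complex.normSq_apply, Complex.mul_re,
      Complex.star_def, Complex.conj_re, Complex.conj_im]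
    nlinarith [sq_nonneg (c.re * r - (s + t * r) * y.re), sq_nonneg (c.im * r - (s + t * r) * y.im)]

lemma scalar_eq (c : ℂ) (r s t : ℝ) (hr : 0 ≤ r) (hs : 0 ≤ s) (ht : 0 < t) :
    2 * (star (c * ((r / (s + t * r) : ℝ) : ℂ)) * c).re * r
      - (s + t * r) * Complex.normSq (c * ((r / (s + t * r) : ℝ) : ℂ)) =
      Complex.normSq c * (r ^ 2 / (s + t * r)) := by
  rcases hr.eq_or_lt with h | h
  · rw [← h]; simp
  · have hk : 0 < s + t * r := by positivity
    generalize s + t * r = k at hk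
    simp only [Complex.normSq_apply, Complex.mul_re, Complex.mul_im, Complex.ofReal_re,
      Complex.ofReal_im,
      Complex.star_def, Complex.conj_re, Complex.conj_im]
    field_simp
    ring

lemma colsum {k : Type*} [Fintype k] [DecidableEq k] (U V : Matrix k k ℂ)
    (hU : Uᴴ * U = 1) (hV : Vᴴ * V = 1) (i : k) :
    ∑ j, Complex.normSq ((Vᴴ * U) j i) = 1 := by
  have h1 : (Vᴴ * U)ᴴ * (Vᴴ * U) = 1 := by
    have hV2 : V * Vᴴ = 1 := mul_eq_one_comm.1 hV
    rw [conjTranspose_mul, conjTranspose_conjTranspose, mul_assoc, ← mul_assoc V, hV2, one_mul,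
      hU]
  have h2 := congrFun (congrFun h1 i) i
  rw [mul_apply, one_apply_eq] at h2
  have h3 := congrArg Complex.re h2
  rw [Complex.re_sum] at h3
  rw [← Complex.one_re, ← h3]
  refine Finset.sum_congr rfl fun j _ => ?_
  simp [conjTranspose_apply, Complex.normSq_apply]

/-- Data processing in eigenbasis form. -/
lemma dpi {m n : Type*} [Fintype m] [DecidableEq m] [Fintype n] [DecidableEq n]
    (U V : Matrix m m ℂ) (r s : m → ℝ) (U' V' : Matrix n n ℂ) (r' s' : n → ℝ)
    (hU : Uᴴ * U = 1) (hV : Vᴴ * V = 1) (hU' : U'ᴴ * U' = 1) (hV' : V'ᴴ * V' = 1)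
    (hr : ∀ i, 0 ≤ r i) (hs : ∀ i, 0 ≤ s i) (hr' : ∀ i, 0 ≤ r' i) (hs' : ∀ i, 0 ≤ s' i)
    (hd : ∀ j, ∑ i, Complex.normSq ((Vᴴ * U) j i) * r i = s j)
    (hd' : ∀ j, ∑ i, Complex.normSq ((V'ᴴ * U') j i) * r' i = s' j)
    (htr : ∑ i, r i = ∑ i, r' i)
    (hphi : ∀ t : ℝ, ∀ X : Matrix n n ℂ, ∃ Z : Matrix m m ℂ,
      phiFun t (U' * diagonal (fun i => (r' i : ℂ)) * U'ᴴ)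
        (V' * diagonal (fun i => (s' i : ℂ)) * V'ᴴ) X =
      phiFun t (U * diagonal (fun i => (r i : ℂ)) * Uᴴ)
        (V * diagonal (fun i => (s i : ℂ)) * Vᴴ) Z) :
    (∑ j, s j * Real.log (s j)) - (∑ j, s' j * Real.log (s' j)) ≤
      (∑ i, r i * Real.log (r i)) - ∑ i, r' i * Real.log (r' i) := by
  have hc := colsum U V hU hV
  have hc' := colsum U' V' hU' hV'
  have hF : ∀ t : ℝ, 0 < t →
      ∑ j, ∑ i, Complex.normSq ((V'ᴴ * U') j i) * (r' i ^ 2 / (s' j + t * r' i)) ≤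
      ∑ j, ∑ i, Complex.normSq ((Vᴴ * U) j i) * (r i ^ 2 / (s j + t * r i)) := by
    intro t ht
    let Y : Matrix n n ℂ := of fun j i =>
      (V'ᴴ * U') j i * ((r' i / (s' j + t * r' i) : ℝ) : ℂ)
    obtain ⟨Z, hZ⟩ := hphi t (V' * Y * U'ᴴ)
    have hV2 : V * Vᴴ = 1 := mul_eq_one_comm.1 hV
    have hU2 : U * Uᴴ = 1 := mul_eq_one_comm.1 hU
    have hZ2 : Z = V * (Vᴴ * Z * U) * Uᴴ := by
      calc Z = (V * Vᴴ) * Z * (U * Uᴴ) := by rw [hV2, hU2, one_mul, mul_one]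
        _ = _ := by simp only [mul_assoc]
    rw [hZ2, phiFun_eq t U' V' Y r' s' hU' hV', phiFun_eq t U V _ r s hU hV] at hZ
    calc _ = _ := Finset.sum_congr rfl fun j _ => Finset.sum_congr rfl fun i _ =>
          (scalar_eq ((V'ᴴ * U') j i) (r' i) (s' j) t (hr' i) (hs' j) ht).symm
      _ = _ := hZ
      _ ≤ _ := Finset.sum_le_sum fun j _ => Finset.sum_le_sum fun i _ =>
          scalar_le _ _ _ _ _ (hr i) (hs j) ht
  have main := analytic_core (ι := (m × m) ⊕ (n × n))
    (Sum.elim (fun p => Complex.normSq ((Vᴴ * U) p.1 p.2))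
      (fun p => -Complex.normSq ((V'ᴴ * U') p.1 p.2)))
    (Sum.elim (fun p => r p.2) (fun p => r' p.2))
    (Sum.elim (fun p => s p.1) (fun p => s' p.1))
    (by rintro (p | p); exacts [hr _, hr' _])
    (by rintro (p | p); exacts [hs _, hs' _])
    (by
      rintro (⟨j, i⟩ | ⟨j, i⟩) h
      · have h : s j = 0 := h
        rw [← hd j, Finset.sum_eq_zero_iff_of_nonneg
          (fun i _ => mul_nonneg (Complex.normSq_nonneg _) (hr i))] at h
        exact h i (Finset.mem_univ _)
      · have h : s' j = 0 := h
        rw [← hd' j, Finset.sum_eq_zero_iff_of_nonneg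
          (fun i _ => mul_nonneg (Complex.normSq_nonneg _) (hr' i))] at h
        have := h i (Finset.mem_univ _)
        simp only [Sum.elim_inr, neg_mul, this, neg_zero])
    (by
      simp only [Fintype.sum_sum_type, Sum.elim_inl, Sum.elim_inr, Fintype.sum_prod_type_right,
        neg_mul, Finset.sum_neg_distrib]
      simp only [← Finset.sum_mul, hc, hc', one_mul, htr]
      simp)
    (by
      intro t ht
      have := hF t ht
      simp only [Fintype.sum_sum_type, Sum.elim_inl, Sum.elim_inr, Fintype.sum_prod_type,
        neg_mul, Finset.sum_neg_distrib]
      linarith)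
  have l1 : ∑ p : m × m, Complex.normSq ((Vᴴ * U) p.1 p.2) * r p.2 * Real.log (s p.1) =
      ∑ j, s j * Real.log (s j) := by
    simp only [Fintype.sum_prod_type, ← Finset.sum_mul, hd]
  have l2 : ∑ p : n × n, Complex.normSq ((V'ᴴ * U') p.1 p.2) * r' p.2 * Real.log (s' p.1) =
      ∑ j, s' j * Real.log (s' j) := by
    simp only [Fintype.sum_prod_type, ← Finset.sum_mul, hd']
  have l3 : ∑ p : m × m, Complex.normSq ((Vᴴ * U) p.1 p.2) * r p.2 * Real.log (r p.2) =
      ∑ j, r j * Real.log (r j) := by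
    simp only [Fintype.sum_prod_type_right, mul_assoc, ← Finset.sum_mul, hc, one_mul]
  have l4 : ∑ p : n × n, Complex.normSq ((V'ᴴ * U') p.1 p.2) * r' p.2 * Real.log (r' p.2) =
      ∑ j, r' j * Real.log (r' j) := by
    simp only [Fintype.sum_prod_type_right, mul_assoc, ← Finset.sum_mul, hc', one_mul]
  simp only [Fintype.sum_sum_type, Sum.elim_inl, Sum.elim_inr, neg_mul,
    Finset.sum_neg_distrib, l1, l2, l3, l4] at main
  linarith

/-- Block diagonal matrix, blocks indexed by the first factor. -/
def bdiag {A B : Type*} [DecidableEq A] (W : A → Matrix B B ℂ) : Matrix (A × B) (A × B) ℂ :=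
  of fun p q => if p.1 = q.1 then W p.1 p.2 q.2 else 0

lemma bdiag_mul {A B : Type*} [Fintype A] [DecidableEq A] [Fintype B]
    (W W' : A → Matrix B B ℂ) : bdiag W * bdiag W' = bdiag (fun i => W i * W' i) := by
  ext ⟨a, b⟩ ⟨a', b'⟩
  rw [mul_apply, Fintype.sum_prod_type, Finset.sum_eq_single a]
  · by_cases h : a = a'
    · subst h; simp [bdiag, mul_apply]
    · simp [bdiag, h]
  · intro x _ hx
    simp [bdiag, hx.symm]
  · simp

lemma bdiag_conj {A B : Type*} [DecidableEq A]
    (W : A → Matrix B B ℂ) : (bdiag W)ᴴ = bdiag (fun i => (W i)ᴴ) := by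
  ext ⟨a, b⟩ ⟨a', b'⟩
  by_cases h : a = a'
  · subst h; simp [bdiag]
  · simp [bdiag, h, Ne.symm h]

lemma bdiag_diagonal {A B : Type*} [DecidableEq A] [DecidableEq B]
    (d : A → B → ℂ) : bdiag (fun i => diagonal (d i)) = diagonal (fun p => d p.1 p.2) := by
  ext ⟨a, b⟩ ⟨a', b'⟩
  by_cases h : a = a'
  · subst h; simp [bdiag, diagonal_apply]
  · simp [bdiag, h]

lemma eig_exists {m : Type*} [Fintype m] [DecidableEq m] (ρ : Matrix m m ℂ) (h : ρ.PosSemidef) :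
    ∃ (U : Matrix m m ℂ) (r : m → ℝ), Uᴴ * U = 1 ∧ (∀ i, 0 ≤ r i) ∧
      ρ = U * diagonal (fun i => (r i : ℂ)) * Uᴴ ∧
      vnEntropy ρ * Real.log 2 = -∑ i, r i * Real.log (r i) ∧ ρ.trace = ((∑ i, r i : ℝ) : ℂ) := by
  refine ⟨h.1.eigenvectorUnitary, h.1.eigenvalues, ?_, h.eigenvalues_nonneg, ?_, ?_, ?_⟩
  · exact Unitary.coe_star_mul_self h.1.eigenvectorUnitary
  · have := h.1.spectral_theorem
    rw [Unitary.conjStarAlgAut_apply] at this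
    exact this
  · have l2 : Real.log 2 ≠ 0 := by positivity
    rw [vnEntropy, dif_pos h.1, neg_mul, Finset.sum_mul]
    congr 1
    refine Finset.sum_congr rfl fun i _ => ?_
    rw [Real.logb]; field_simp
  · rw [h.1.trace_eq_sum_eigenvalues]; simp

lemma weights_eq {m : Type*} [Fintype m] [DecidableEq m] (U V : Matrix m m ℂ) (r : m → ℝ) (j : m) :
    ∑ i, Complex.normSq ((Vᴴ * U) j i) * r i =
      ((Vᴴ * (U * diagonal (fun i => (r i : ℂ)) * Uᴴ) * V) j j).re := by
  have : Vᴴ * (U * diagonal (fun i => (r i : ℂ)) * Uᴴ) * V =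
      (Vᴴ * U) * diagonal (fun i => (r i : ℂ)) * (Vᴴ * U)ᴴ := by
    simp only [conjTranspose_mul, conjTranspose_conjTranspose, mul_assoc]
  rw [this]
  generalize Vᴴ * U = C
  rw [mul_apply, Complex.re_sum]
  refine Finset.sum_congr rfl fun i _ => ?_
  rw [mul_diagonal]
  simp [Complex.normSq_apply, Complex.mul_re]
  ring

lemma probA_coe {A B : Type*} [Fintype B] (ρ : Matrix (A × B) (A × B) ℂ) (h : ρ.PosSemidef)
    (i : A) : ((probA ρ i : ℝ) : ℂ) = ∑ b, ρ (i, b) (i, b) ∧ 0 ≤ probA ρ i := by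
  have h1 : 0 ≤ ∑ b, ρ (i, b) (i, b) := Finset.sum_nonneg fun b _ => h.diag_nonneg
  have h2 := Complex.nonneg_iff.1 h1
  refine ⟨?_, h2.1⟩
  apply Complex.ext
  · simp [probA]
  · simpa using h2.2

lemma condB_facts {A B : Type*} [Fintype B] [DecidableEq B]
    (ρ : Matrix (A × B) (A × B) ℂ) (h : ρ.PosSemidef) (i : A) :
    (condB ρ i).PosSemidef ∧
      ((probA ρ i : ℝ) : ℂ) • condB ρ i = (of fun b b' => ρ (i, b) (i, b') : Matrix B B ℂ) ∧
      (probA ρ i ≠ 0 → (condB ρ i).trace = 1) := by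
  obtain ⟨h1, h2⟩ := probA_coe ρ h i
  have hM : (of fun b b' => ρ (i, b) (i, b') : Matrix B B ℂ).PosSemidef :=
    h.submatrix (fun b => (i, b))
  have hT : (of fun b b' => ρ (i, b) (i, b') : Matrix B B ℂ).trace = (probA ρ i : ℝ) := by
    rw [h1]; simp [trace]
  refine ⟨?_, ?_, ?_⟩
  · apply hM.smul
    rw [← Complex.ofReal_inv]
    exact_mod_cast inv_nonneg.2 h2
  · by_cases hp : probA ρ i = 0
    · rw [hp, Complex.ofReal_zero, hM.trace_eq_zero_iff] at hT
      rw [hT, hp]; simp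
    · rw [condB, smul_smul, mul_inv_cancel₀ (by exact_mod_cast hp), one_smul]
  · intro hp
    rw [condB, trace_smul, hT, smul_eq_mul, inv_mul_cancel₀ (by exact_mod_cast hp)]

lemma deph_eig {A B : Type*} [Fintype A] [DecidableEq A] [Fintype B] [DecidableEq B]
    (ρ : Matrix (A × B) (A × B) ℂ) (h : ρ.PosSemidef) :
    ∃ (V : Matrix (A × B) (A × B) ℂ) (s : A × B → ℝ), Vᴴ * V = 1 ∧ (∀ i, 0 ≤ s i) ∧
      dephA ρ = V * diagonal (fun i => (s i : ℂ)) * Vᴴ ∧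
      (∀ j, ((Vᴴ * ρ * V) j j).re = s j) ∧
      ∑ j, s j * Real.log (s j) = ∑ i, probA ρ i * Real.log (probA ρ i)
        - (∑ i, probA ρ i * vnEntropy (condB ρ i)) * Real.log 2 := by
  choose W l hW hl hWl hS hT using fun i => eig_exists (condB ρ i) (condB_facts ρ h i).1
  have hVV : (bdiag W)ᴴ * bdiag W = 1 := by
    rw [bdiag_conj, bdiag_mul]
    simp only [hW, ← diagonal_one]
    rw [bdiag_diagonal]
  have hdep : dephA ρ =
      bdiag W * diagonal (fun p => ((probA ρ p.1 * l p.1 p.2 : ℝ) : ℂ)) * (bdiag W)ᴴ := by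
    rw [← bdiag_diagonal (fun i k => ((probA ρ i * l i k : ℝ) : ℂ)), bdiag_conj, bdiag_mul,
      bdiag_mul]
    have : ∀ i, W i * diagonal (fun k => ((probA ρ i * l i k : ℝ) : ℂ)) * (W i)ᴴ =
        (of fun b b' => ρ (i, b) (i, b') : Matrix B B ℂ) := by
      intro i
      rw [← (condB_facts ρ h i).2.1]
      conv_rhs => rw [hWl i]
      have e : diagonal (fun k => ((probA ρ i * l i k : ℝ) : ℂ)) =
          ((probA ρ i : ℝ) : ℂ) • diagonal (fun k => (l i k : ℂ)) := by
        rw [← diagonal_smul]; congr 1; ext k; simp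
      rw [e, mul_smul_comm, smul_mul_assoc]
    simp only [this]
    ext ⟨a, b⟩ ⟨a', b'⟩
    by_cases hh : a = a'
    · subst hh; simp [dephA, bdiag]
    · simp [dephA, bdiag, hh]
  refine ⟨bdiag W, fun p => probA ρ p.1 * l p.1 p.2, hVV,
    fun p => mul_nonneg (probA_coe ρ h p.1).2 (hl _ _), hdep, ?_, ?_⟩
  · intro j
    have e1 : ((bdiag W)ᴴ * ρ * bdiag W) j j = ((bdiag W)ᴴ * dephA ρ * bdiag W) j j := by
      simp only [mul_apply, Finset.sum_mul]
      refine Finset.sum_congr rfl fun q _ => Finset.sum_congr rfl fun p _ => ?_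
      by_cases hp : p.1 = j.1
      · by_cases hq : q.1 = j.1
        · simp [dephA, hp, hq]
        · simp [bdiag, hq]
      · simp [bdiag, hp]
    have e2 : (bdiag W)ᴴ * dephA ρ * bdiag W =
        diagonal (fun p => ((probA ρ p.1 * l p.1 p.2 : ℝ) : ℂ)) := by
      rw [hdep]
      calc _ = ((bdiag W)ᴴ * bdiag W) * diagonal (fun p => ((probA ρ p.1 * l p.1 p.2 : ℝ) : ℂ))
            * ((bdiag W)ᴴ * bdiag W) := by simp only [mul_assoc]
        _ = _ := by rw [hVV, one_mul, mul_one]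
    rw [e1, e2, diagonal_apply_eq, Complex.ofReal_re]
  · rw [Fintype.sum_prod_type, Finset.sum_mul, ← Finset.sum_sub_distrib]
    refine Finset.sum_congr rfl fun i _ => ?_
    rw [mul_assoc, hS]
    by_cases hp : probA ρ i = 0
    · simp [hp]
    · have h1 : ∑ k, l i k = 1 := by
        have := (hT i).symm.trans ((condB_facts ρ h i).2.2 hp)
        exact_mod_cast this
      have : ∀ k, probA ρ i * l i k * Real.log (probA ρ i * l i k) =
          l i k * (probA ρ i * Real.log (probA ρ i)) +
            probA ρ i * (l i k * Real.log (l i k)) := by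
        intro k
        by_cases hk : l i k = 0
        · simp [hk]
        · rw [Real.log_mul hp hk]; ring
      simp only [this, Finset.sum_add_distrib, ← Finset.sum_mul, ← Finset.mul_sum, h1]
      ring

/-- `X ↦ X ⊗ 1` on the last system. -/
def hatB {A B B' : Type*} [DecidableEq B'] (X : Matrix (A × B) (A × B) ℂ) :
    Matrix (A × B × B') (A × B × B') ℂ :=
  of fun p q => if p.2.2 = q.2.2 then X (p.1, p.2.1) (q.1, q.2.1) else 0

section
variable {A B B' : Type*} [Fintype A] [Fintype B] [Fintype B'] [DecidableEq A] [DecidableEq B]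
  [DecidableEq B']

lemma hatB_mul (X Y : Matrix (A × B) (A × B) ℂ) :
    (hatB (X * Y) : Matrix (A × B × B') (A × B × B') ℂ) = hatB X * hatB Y := by
  ext ⟨a, b, c⟩ ⟨a', b', c'⟩
  by_cases h : c = c'
  · subst h; simp [hatB, mul_apply, Fintype.sum_prod_type]
  · simp [hatB, mul_apply, Fintype.sum_prod_type, h]

lemma hatB_conj (X : Matrix (A × B) (A × B) ℂ) :
    (hatB Xᴴ : Matrix (A × B × B') (A × B × B') ℂ) = (hatB X)ᴴ := by
  ext ⟨a, b, c⟩ ⟨a', b', c'⟩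
  by_cases h : c = c'
  · subst h; simp [hatB]
  · simp [hatB, h, Ne.symm h]

lemma hatB_trace (X : Matrix (A × B) (A × B) ℂ) (ρ : Matrix (A × B × B') (A × B × B') ℂ) :
    (hatB X * ρ).trace = (X * ptrB2 ρ).trace := by
  simp only [trace, diag_apply, mul_apply, Fintype.sum_prod_type, hatB, ptrB2, of_apply,
    Finset.mul_sum, ite_mul, zero_mul, Finset.sum_ite_eq, Finset.mem_univ, if_true]
  refine Finset.sum_congr rfl fun a _ => Finset.sum_congr rfl fun b _ => ?_
  rw [Finset.sum_comm]
  refine Finset.sum_congr rfl fun a' _ => ?_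
  rw [Finset.sum_comm]

lemma phi_hat (t : ℝ) (ρ σ : Matrix (A × B × B') (A × B × B') ℂ) (X : Matrix (A × B) (A × B) ℂ) :
    phiFun t (ptrB2 ρ) (ptrB2 σ) X = phiFun t ρ σ (hatB X) := by
  have e (M : Matrix (A × B × B') (A × B × B') ℂ) (Y Z : Matrix (A × B) (A × B) ℂ) :
      (hatB Y * (M * hatB Z)).trace = (Y * (ptrB2 M * Z)).trace := by
    rw [← mul_assoc, trace_mul_comm, ← mul_assoc, ← hatB_mul, hatB_trace, mul_assoc,
      trace_mul_comm, mul_assoc]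
  simp only [phiFun, ← hatB_conj, e, hatB_trace]

lemma ptrB2_psd (ρ : Matrix (A × B × B') (A × B × B') ℂ) (h : ρ.PosSemidef) :
    (ptrB2 ρ).PosSemidef := by
  have : ptrB2 ρ = ∑ c, ρ.submatrix (fun p : A × B => (p.1, p.2, c))
      (fun p : A × B => (p.1, p.2, c)) := by
    ext p q; simp [ptrB2, Matrix.sum_apply]
  rw [this]
  exact posSemidef_sum _ fun c _ => h.submatrix _

theorem qdi_mono (ρ : Matrix (A × B × B') (A × B × B') ℂ) (h : ρ.PosSemidef) :
    QDI (ptrB2 ρ) ≤ QDI ρ := by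
  have h' := ptrB2_psd ρ h
  obtain ⟨U, r, hU, hr, hρ, hS, hT⟩ := eig_exists ρ h
  obtain ⟨U', r', hU', hr', hρ', hS', hT'⟩ := eig_exists (ptrB2 ρ) h'
  obtain ⟨V, s, hV, hs, hσ, hd, hE⟩ := deph_eig ρ h
  obtain ⟨V', s', hV', hs', hσ', hd', hE'⟩ := deph_eig (ptrB2 ρ) h'
  have hpt : (ptrB2 ρ).trace = ρ.trace := by
    simp [trace, ptrB2, Fintype.sum_prod_type]
  have hprob : ∀ i, probA (ptrB2 ρ) i = probA ρ i := by
    intro i; simp [probA, ptrB2, Fintype.sum_prod_type]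
  have hA : ptrB (ptrB2 ρ) = ptrB ρ := by
    ext a a'; simp [ptrB, ptrB2, Fintype.sum_prod_type]
  have hdp : dephA (ptrB2 ρ) = ptrB2 (dephA ρ) := by
    ext ⟨a, b⟩ ⟨a', b'⟩
    by_cases hh : a = a'
    · subst hh; simp [dephA, ptrB2]
    · simp [dephA, ptrB2, hh]
  have key := dpi U V r s U' V' r' s' hU hV hU' hV' hr hs hr' hs'
    (fun j => by rw [weights_eq, ← hρ, hd])
    (fun j => by rw [weights_eq, ← hρ', hd'])
    (by
      rw [hpt, hT] at hT'
      exact_mod_cast hT')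
    (fun t X => ⟨hatB X, by rw [← hρ, ← hρ', ← hσ, ← hσ', hdp, phi_hat]⟩)
  rw [hE, hE'] at key
  simp only [hprob] at key
  have l2 : 0 < Real.log 2 := Real.log_pos (by norm_num)
  have : QDI (ptrB2 ρ) * Real.log 2 ≤ QDI ρ * Real.log 2 := by
    simp only [QDI, hprob, hA, sub_mul, add_mul, hS, hS']
    linarith
  exact le_of_mul_le_mul_right this l2

end

/-- discarding a subsystem `B'` on the unmeasured side does not increase the
QDI measured on `A`: `D_{BB'|A}(ρ_ABB') ≥ D_{B|A}(tr_{B'} ρ_ABB')`. -/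
theorem stmt9 {dA dB dB' : ℕ}
    (ρ : Matrix (Fin dA × Fin dB × Fin dB') (Fin dA × Fin dB × Fin dB') ℂ)
    (hρ : IsDensityMatrix ρ) :
    QDI (ptrB2 ρ) ≤ QDI ρ := by
  exact qdi_mono ρ hρ.1
end
end

section
/- Let ρ_AB be a bipartite density matrix on ℂ^{d_A}⊗ℂ^{d_B} and let Λ_B be a quantum channel from B to B'' given by Kraus operators {K_l} (each K_l a d_B''×d_B complex matrix with Σ_l K_l†K_l = 1). Then D_{B|A}(ρ_AB) ≥ D_{B''|A}((id_A⊗Λ_B)(ρ_AB)), i.e., the QDI measured on A cannot be increased by any local quantum channel acting on B. -/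
open Matrix Kronecker BigOperators
open scoped ComplexOrder

noncomputable section

section QDIaux
open Filter Topology

lemma qdi_real {ι κ : Type} [Fintype ι] [Fintype κ] (c r s : ι → ℝ) (c' r' s' : κ → ℝ)
    (hr : ∀ k, 0 ≤ r k) (hs : ∀ k, 0 ≤ s k) (hcs : ∀ k, s k = 0 → c k * r k = 0)
    (hr' : ∀ k, 0 ≤ r' k) (hs' : ∀ k, 0 ≤ s' k) (hcs' : ∀ k, s' k = 0 → c' k * r' k = 0)
    (hsum : ∑ k, c k * r k = ∑ k, c' k * r' k)
    (hF : ∀ t : ℝ, 0 < t → ∑ k, c' k * (r' k ^ 2 / (t * r' k + s' k)) ≤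
      ∑ k, c k * (r k ^ 2 / (t * r k + s k))) :
    ∑ k, c' k * r' k * (Real.log (r' k) - Real.log (s' k)) ≤
      ∑ k, c k * r k * (Real.log (r k) - Real.log (s k)) := by
  have key : ∀ {ι : Type} [Fintype ι] (c r s : ι → ℝ)
    (_ : ∀ k, 0 ≤ r k) (_ : ∀ k, 0 ≤ s k) (_ : ∀ k, s k = 0 → c k * r k = 0),
    (∀ t : ℝ, 0 < t → HasDerivAt (fun t => ∑ k, c k * r k * Real.log (t * r k + s k))
      (∑ k, c k * (r k ^ 2 / (t * r k + s k))) t) ∧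
    Tendsto (fun t => ∑ k, c k * r k * Real.log (t * r k + s k)) (𝓝[>] 0)
      (𝓝 (∑ k, c k * r k * Real.log (s k))) ∧
    Tendsto (fun t => ∑ k, c k * r k * Real.log (t * r k + s k) -
      (∑ k, c k * r k) * Real.log t) atTop (𝓝 (∑ k, c k * r k * Real.log (r k))) := by
    intro ι _ c r s hr hs hcs
    refine ⟨fun t ht => ?_, ?_, ?_⟩
    · apply HasDerivAt.fun_sum
      intro k _
      rcases eq_or_lt_of_le (hr k) with h | h
      · simp [← h, hasDerivAt_const]
      · have h1 : HasDerivAt (fun t => t * r k + s k) (r k) t := by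
          simpa using ((hasDerivAt_id t).mul_const (r k)).add_const (s k)
        have h2 : t * r k + s k ≠ 0 := by have := hs k; positivity
        have h3 := (h1.log h2).const_mul (c k * r k)
        rwa [show c k * r k * (r k / (t * r k + s k)) = c k * (r k ^ 2 / (t * r k + s k)) by ring] at h3
    · apply tendsto_finsetSum
      intro k _
      by_cases h : c k * r k = 0
      · simp [h]
      · have h2 : s k ≠ 0 := fun h' => h (hcs k h')
        apply Tendsto.const_mul
        apply Tendsto.mono_left _ nhdsWithin_le_nhds
        have : ContinuousAt (fun t : ℝ => Real.log (t * r k + s k)) 0 := by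
          apply ContinuousAt.log
          · fun_prop
          · simpa using h2
        simpa [ContinuousAt] using this
    · have h3 : Tendsto (fun t => ∑ k, c k * r k * Real.log (r k + t⁻¹ * s k)) atTop
          (𝓝 (∑ k, c k * r k * Real.log (r k))) := by
        apply tendsto_finsetSum
        intro k _
        by_cases h : c k * r k = 0
        · simp [h]
        · have h2 : r k ≠ 0 := fun h' => h (by simp [h'])
          apply Tendsto.const_mul
          have h4 : Tendsto (fun t : ℝ => r k + t⁻¹ * s k) atTop (𝓝 (r k)) := by
            simpa using (tendsto_inv_atTop_zero.mul_const (s k)).const_add (r k)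
          exact h4.log h2
      refine h3.congr' ?_
      filter_upwards [eventually_gt_atTop 0] with t ht
      rw [Finset.sum_mul, ← Finset.sum_sub_distrib]
      refine Finset.sum_congr rfl fun k _ => ?_
      rcases eq_or_lt_of_le (hr k) with h | h
      · simp [← h]
      · have h2 : t * r k + s k ≠ 0 := by have := hs k; positivity
        rw [← mul_sub, ← Real.log_div h2 ht.ne']
        congr 2
        field_simp
  obtain ⟨d, z, i⟩ := key c r s hr hs hcs
  obtain ⟨d', z', i'⟩ := key c' r' s' hr' hs' hcs'
  set f := fun t => ∑ k, c k * r k * Real.log (t * r k + s k)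
  set f' := fun t => ∑ k, c' k * r' k * Real.log (t * r' k + s' k)
  have mono : MonotoneOn (fun t => f t - f' t) (Set.Ioi 0) := by
    apply monotoneOn_of_deriv_nonneg (convex_Ioi 0)
    · intro t ht
      exact ((d t ht).sub (d' t ht)).continuousAt.continuousWithinAt
    · intro t ht
      rw [interior_Ioi] at ht
      exact ((d t ht).sub (d' t ht)).differentiableAt.differentiableWithinAt
    · intro t ht
      rw [interior_Ioi] at ht
      have := ((d t ht).sub (d' t ht)).deriv
      have h2 := hF t ht
      change 0 ≤ deriv (f - f') t
      rw [this]; linarith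
  have Z := z.sub z'
  have I := i.sub i'
  have I' : Tendsto (fun t => f t - f' t) atTop
      (𝓝 (∑ k, c k * r k * Real.log (r k) - ∑ k, c' k * r' k * Real.log (r' k))) := by
    refine I.congr fun t => ?_
    rw [hsum]; simp only [f, f']; ring
  have h1 : ∀ t ∈ Set.Ioi (0:ℝ), f t - f' t ≤
      ∑ k, c k * r k * Real.log (r k) - ∑ k, c' k * r' k * Real.log (r' k) := by
    intro t ht
    refine ge_of_tendsto I' ?_
    filter_upwards [eventually_ge_atTop t] with u hu
    exact mono ht (lt_of_lt_of_le ht hu) hu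
  have h2 := le_of_tendsto Z (eventually_nhdsWithin_of_forall h1)
  simp only [mul_sub, Finset.sum_sub_distrib]
  linarith

section
variable {n m L : Type} [Fintype n] [Fintype m] [Fintype L] [DecidableEq n] [DecidableEq m]

lemma qdi_KS (σ : Matrix n n ℂ) (hσ : σ.PosSemidef) (N : L → Matrix m n ℂ)
    (hN : ∑ l, (N l)ᴴ * N l = 1) (Y : Matrix m m ℂ) :
    (σ * ((∑ l, (N l)ᴴ * Y * N l)ᴴ * (∑ l, (N l)ᴴ * Y * N l))).trace.re ≤
      ((∑ l, N l * σ * (N l)ᴴ) * (Yᴴ * Y)).trace.re := by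
  set X := ∑ l, (N l)ᴴ * Y * N l with hX
  have h1 : ∑ l, (Y * N l - N l * X)ᴴ * (Y * N l - N l * X) =
      ∑ l, (N l)ᴴ * (Yᴴ * Y) * N l - Xᴴ * X := by
    have e1 : ∑ l, (N l)ᴴ * Yᴴ * N l * X = Xᴴ * X := by
      rw [← Finset.sum_mul]; congr 1
      rw [hX]; simp [conjTranspose_sum, Matrix.mul_assoc]
    have e2 : ∑ l, Xᴴ * ((N l)ᴴ * Y * N l) = Xᴴ * X := by
      rw [← Finset.mul_sum]
    have e3 : ∑ l, Xᴴ * ((N l)ᴴ * N l) * X = Xᴴ * X := by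
      rw [← Finset.sum_mul, ← Finset.mul_sum, hN, Matrix.mul_one]
    have : ∀ l, (Y * N l - N l * X)ᴴ * (Y * N l - N l * X) = (N l)ᴴ * (Yᴴ * Y) * N l
        - (N l)ᴴ * Yᴴ * N l * X - Xᴴ * ((N l)ᴴ * Y * N l) + Xᴴ * ((N l)ᴴ * N l) * X := by
      intro l
      simp only [conjTranspose_sub, conjTranspose_mul, Matrix.sub_mul, Matrix.mul_sub,
        Matrix.mul_assoc]
      abel
    simp only [this, Finset.sum_add_distrib, Finset.sum_sub_distrib, e1, e2, e3]
    abel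
  have h2 : 0 ≤ (σ * ∑ l, (Y * N l - N l * X)ᴴ * (Y * N l - N l * X)).trace.re := by
    rw [Finset.mul_sum, trace_sum, Complex.re_sum]
    refine Finset.sum_nonneg fun l _ => ?_
    rw [← Matrix.mul_assoc, Matrix.trace_mul_comm, ← Matrix.mul_assoc]
    have := (hσ.mul_mul_conjTranspose_same (Y * N l - N l * X)).trace_nonneg
    exact (Complex.le_def.1 this).1
  rw [h1, Matrix.mul_sub, trace_sub, Complex.sub_re] at h2
  have h3 : (σ * ∑ l, (N l)ᴴ * (Yᴴ * Y) * N l).trace =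
      ((∑ l, N l * σ * (N l)ᴴ) * (Yᴴ * Y)).trace := by
    rw [Finset.mul_sum, Finset.sum_mul, trace_sum, trace_sum]
    refine Finset.sum_congr rfl fun l _ => ?_
    rw [← Matrix.mul_assoc, Matrix.trace_mul_comm]
    simp only [Matrix.mul_assoc]
  rw [h3] at h2
  linarith

/-- variational functional -/
def qdiQ (ρ σ : Matrix n n ℂ) (t : ℝ) (X : Matrix n n ℂ) : ℝ :=
  2 * (ρ * X).trace.re - t * (ρ * (X * Xᴴ)).trace.re - (σ * (Xᴴ * X)).trace.re

lemma qdi_Q_mono (ρ σ : Matrix n n ℂ) (hρ : ρ.PosSemidef) (hσ : σ.PosSemidef)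
    (N : L → Matrix m n ℂ) (hN : ∑ l, (N l)ᴴ * N l = 1) (t : ℝ) (ht : 0 < t) (Y : Matrix m m ℂ) :
    qdiQ (∑ l, N l * ρ * (N l)ᴴ) (∑ l, N l * σ * (N l)ᴴ) t Y ≤
      qdiQ ρ σ t (∑ l, (N l)ᴴ * Y * N l) := by
  have h1 := qdi_KS σ hσ N hN Y
  have h2 := qdi_KS ρ hρ N hN Yᴴ
  have e : ∑ l, (N l)ᴴ * Yᴴ * N l = (∑ l, (N l)ᴴ * Y * N l)ᴴ := by
    simp [conjTranspose_sum, Matrix.mul_assoc]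
  rw [e, conjTranspose_conjTranspose, conjTranspose_conjTranspose] at h2
  have h3 : ((∑ l, N l * ρ * (N l)ᴴ) * Y).trace = (ρ * ∑ l, (N l)ᴴ * Y * N l).trace := by
    rw [Finset.mul_sum, Finset.sum_mul, trace_sum, trace_sum]
    refine Finset.sum_congr rfl fun l _ => ?_
    rw [← Matrix.mul_assoc ρ, Matrix.trace_mul_comm _ (N l)]
    simp only [Matrix.mul_assoc]
  unfold qdiQ
  rw [h3]
  have := mul_le_mul_of_nonneg_left h2 ht.le
  linarith

lemma qdi_Q_coord (U V : Matrix n n ℂ) (hU : Uᴴ * U = 1) (hV : Vᴴ * V = 1) (r s : n → ℝ)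
    (t : ℝ) (x : Matrix n n ℂ) :
    qdiQ (U * diagonal (fun i => (r i : ℂ)) * Uᴴ) (V * diagonal (fun i => (s i : ℂ)) * Vᴴ) t
      (U * x * Vᴴ) = ∑ i, ∑ j, (2 * r i * (x i j * star ((Uᴴ * V) i j)).re
        - (t * r i + s j) * Complex.normSq (x i j)) := by
  have e1 : (U * diagonal (fun i => (r i : ℂ)) * Uᴴ * (U * x * Vᴴ)).trace =
      ∑ i, ∑ j, (r i : ℂ) * (x i j * star ((Uᴴ * V) i j)) := by
    have : U * diagonal (fun i => (r i : ℂ)) * Uᴴ * (U * x * Vᴴ) =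
      U * (diagonal (fun i => (r i : ℂ)) * (Uᴴ * U) * x * Vᴴ) := by
      simp only [Matrix.mul_assoc]
    rw [this, Matrix.trace_mul_comm, hU, Matrix.mul_one, Matrix.mul_assoc, Matrix.mul_assoc]
    have : Vᴴ * U = (Uᴴ * V)ᴴ := by simp
    rw [this]
    simp only [trace, diag, diagonal_mul]
    refine Finset.sum_congr rfl fun i _ => ?_
    rw [Matrix.mul_apply, Finset.mul_sum]
    rfl
  have e2 : (U * diagonal (fun i => (r i : ℂ)) * Uᴴ * ((U * x * Vᴴ) * (U * x * Vᴴ)ᴴ)).trace =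
      ∑ i, ∑ j, (r i : ℂ) * (Complex.normSq (x i j) : ℂ) := by
    have : U * diagonal (fun i => (r i : ℂ)) * Uᴴ * ((U * x * Vᴴ) * (U * x * Vᴴ)ᴴ) =
      U * (diagonal (fun i => (r i : ℂ)) * (Uᴴ * U) * x * (Vᴴ * V) * xᴴ * Uᴴ) := by
      simp only [Matrix.mul_assoc, conjTranspose_mul, conjTranspose_conjTranspose]
    rw [this, Matrix.trace_mul_comm, hU, hV, Matrix.mul_one, Matrix.mul_one, Matrix.mul_assoc, hU,
      Matrix.mul_one, Matrix.mul_assoc]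
    simp only [trace, diag, diagonal_mul]
    refine Finset.sum_congr rfl fun i _ => ?_
    rw [Matrix.mul_apply, Finset.mul_sum]
    simp [Complex.mul_conj]
  have e3 : (V * diagonal (fun i => (s i : ℂ)) * Vᴴ * ((U * x * Vᴴ)ᴴ * (U * x * Vᴴ))).trace =
      ∑ i, ∑ j, (s j : ℂ) * (Complex.normSq (x i j) : ℂ) := by
    have : V * diagonal (fun i => (s i : ℂ)) * Vᴴ * ((U * x * Vᴴ)ᴴ * (U * x * Vᴴ)) =
      V * (diagonal (fun i => (s i : ℂ)) * (Vᴴ * V) * xᴴ * (Uᴴ * U) * x * Vᴴ) := by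
      simp only [Matrix.mul_assoc, conjTranspose_mul, conjTranspose_conjTranspose]
    rw [this, Matrix.trace_mul_comm, hU, hV, Matrix.mul_one, Matrix.mul_one, Matrix.mul_assoc, hV,
      Matrix.mul_one, Matrix.mul_assoc]
    simp only [trace, diag, diagonal_mul]
    rw [Finset.sum_comm]
    refine Finset.sum_congr rfl fun i _ => ?_
    rw [Matrix.mul_apply, Finset.mul_sum]
    simp [Complex.normSq_eq_conj_mul_self]
  unfold qdiQ
  rw [e1, e2, e3]
  simp only [Complex.re_sum, Complex.re_ofReal_mul, Complex.ofReal_re, Finset.mul_sum,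
    ← Finset.sum_sub_distrib]
  refine Finset.sum_congr rfl fun i _ => Finset.sum_congr rfl fun j _ => ?_
  ring

lemma qdi_F_le (U V : Matrix n n ℂ) (hU : Uᴴ * U = 1) (hV : Vᴴ * V = 1) (r s : n → ℝ)
    (hr : ∀ i, 0 ≤ r i) (hs : ∀ i, 0 ≤ s i) (t : ℝ) (ht : 0 < t) (X : Matrix n n ℂ) :
    qdiQ (U * diagonal (fun i => (r i : ℂ)) * Uᴴ) (V * diagonal (fun i => (s i : ℂ)) * Vᴴ) t X
      ≤ ∑ k : n × n, Complex.normSq ((Uᴴ * V) k.1 k.2) * (r k.1 ^ 2 / (t * r k.1 + s k.2)) := by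
  have hX : X = U * (Uᴴ * X * V) * Vᴴ := by
    have h1 : U * Uᴴ = 1 := mul_eq_one_comm.1 hU
    have h2 : V * Vᴴ = 1 := mul_eq_one_comm.1 hV
    calc X = (U * Uᴴ) * X * (V * Vᴴ) := by rw [h1, h2]; simp
      _ = _ := by simp only [Matrix.mul_assoc]
  rw [hX, qdi_Q_coord U V hU hV, Fintype.sum_prod_type]
  refine Finset.sum_le_sum fun i _ => Finset.sum_le_sum fun j _ => ?_
  generalize (Uᴴ * X * V) i j = x
  generalize (Uᴴ * V) i j = c
  simp only
  rcases eq_or_lt_of_le (hr i) with h | h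
  · rw [← h]; simp only [mul_zero, zero_mul, zero_add]
    have := mul_nonneg (hs j) (Complex.normSq_nonneg x)
    simp; exact this
  · have h2 : 0 < t * r i + s j := by have := hs j; positivity
    generalize t * r i + s j = d at *
    rw [← mul_div_assoc, le_div_iff₀ h2]
    simp only [Complex.normSq_apply, Complex.star_def, Complex.mul_re, Complex.conj_re,
      Complex.conj_im]
    nlinarith [sq_nonneg (d * x.re - r i * c.re), sq_nonneg (d * x.im - r i * c.im)]

lemma qdi_F_eq (U V : Matrix n n ℂ) (hU : Uᴴ * U = 1) (hV : Vᴴ * V = 1) (r s : n → ℝ)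
    (hr : ∀ i, 0 ≤ r i) (hs : ∀ i, 0 ≤ s i) (t : ℝ) (ht : 0 < t) : ∃ X,
    qdiQ (U * diagonal (fun i => (r i : ℂ)) * Uᴴ) (V * diagonal (fun i => (s i : ℂ)) * Vᴴ) t X
      = ∑ k : n × n, Complex.normSq ((Uᴴ * V) k.1 k.2) * (r k.1 ^ 2 / (t * r k.1 + s k.2)) := by
  refine ⟨U * (Matrix.of fun i j => ((r i / (t * r i + s j) : ℝ) : ℂ) * (Uᴴ * V) i j) * Vᴴ, ?_⟩
  rw [qdi_Q_coord U V hU hV, Fintype.sum_prod_type]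
  refine Finset.sum_congr rfl fun i _ => Finset.sum_congr rfl fun j _ => ?_
  simp only [of_apply]
  generalize (Uᴴ * V) i j = c
  rcases eq_or_lt_of_le (hr i) with h | h
  · rw [← h]; simp
  · have h2 : t * r i + s j ≠ 0 := by have := hs j; positivity
    generalize t * r i + s j = d at *
    rw [mul_assoc _ c, Complex.re_ofReal_mul, Complex.star_def, Complex.mul_conj, Complex.ofReal_re,
      Complex.normSq_mul, Complex.normSq_ofReal]
    field_simp
    ring

lemma qdi_rowsum (W : Matrix n n ℂ) (hW : W * Wᴴ = 1) (i : n) :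
    ∑ j, Complex.normSq (W i j) = 1 := by
  have := congrFun (congrFun hW i) i
  rw [Matrix.mul_apply] at this
  simp only [conjTranspose_apply, Complex.star_def, Complex.mul_conj, one_apply_eq] at this
  exact_mod_cast this

lemma qdi_colsum (U V : Matrix n n ℂ) (r s : n → ℝ)
    (hd : ∀ j, (Vᴴ * (U * diagonal (fun i => (r i : ℂ)) * Uᴴ) * V) j j = s j) (j : n) :
    ∑ i, Complex.normSq ((Uᴴ * V) i j) * r i = s j := by
  have h := hd j
  have e : Vᴴ * (U * diagonal (fun i => (r i : ℂ)) * Uᴴ) * V =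
    (Uᴴ * V)ᴴ * (diagonal (fun i => (r i : ℂ)) * (Uᴴ * V)) := by
    simp [Matrix.mul_assoc]
  rw [e, Matrix.mul_apply] at h
  simp only [diagonal_mul, conjTranspose_apply] at h
  have h' : ∑ i, (Complex.normSq ((Uᴴ * V) i j) : ℂ) * r i = s j := by
    rw [← h]
    refine Finset.sum_congr rfl fun i _ => ?_
    rw [Complex.normSq_eq_conj_mul_self, Complex.star_def]; ring
  exact_mod_cast h'

lemma qdi_split (U V : Matrix n n ℂ) (hU : Uᴴ * U = 1) (hV : Vᴴ * V = 1) (r s : n → ℝ)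
    (hd : ∀ j, (Vᴴ * (U * diagonal (fun i => (r i : ℂ)) * Uᴴ) * V) j j = s j) :
    ∑ k : n × n, Complex.normSq ((Uᴴ * V) k.1 k.2) * r k.1 * (Real.log (r k.1) - Real.log (s k.2))
     = ∑ i, r i * Real.log (r i) - ∑ j, s j * Real.log (s j) := by
  have hW : (Uᴴ * V) * (Uᴴ * V)ᴴ = 1 := by
    have h2 : V * Vᴴ = 1 := mul_eq_one_comm.1 hV
    calc (Uᴴ * V) * (Uᴴ * V)ᴴ = Uᴴ * (V * Vᴴ) * U := by simp [Matrix.mul_assoc]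
      _ = 1 := by rw [h2, Matrix.mul_one, hU]
  simp only [mul_sub, Finset.sum_sub_distrib]
  congr 1
  · rw [Fintype.sum_prod_type]
    refine Finset.sum_congr rfl fun i _ => ?_
    simp only [mul_assoc]
    rw [← Finset.sum_mul, qdi_rowsum _ hW, one_mul]
  · rw [Fintype.sum_prod_type, Finset.sum_comm]
    refine Finset.sum_congr rfl fun j _ => ?_
    simp only
    rw [← Finset.sum_mul, qdi_colsum U V r s hd]

lemma qdi_DPI (N : L → Matrix m n ℂ) (hN : ∑ l, (N l)ᴴ * N l = 1)
    (U V : Matrix n n ℂ) (hU : Uᴴ * U = 1) (hV : Vᴴ * V = 1) (r s : n → ℝ)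
    (hr : ∀ i, 0 ≤ r i) (hs : ∀ i, 0 ≤ s i)
    (hd : ∀ j, (Vᴴ * (U * diagonal (fun i => (r i : ℂ)) * Uᴴ) * V) j j = s j)
    (U' V' : Matrix m m ℂ) (hU' : U'ᴴ * U' = 1) (hV' : V'ᴴ * V' = 1) (r' s' : m → ℝ)
    (hr' : ∀ i, 0 ≤ r' i) (hs' : ∀ i, 0 ≤ s' i)
    (hd' : ∀ j, (V'ᴴ * (U' * diagonal (fun i => (r' i : ℂ)) * U'ᴴ) * V') j j = s' j)
    (hρ : ∑ l, N l * (U * diagonal (fun i => (r i : ℂ)) * Uᴴ) * (N l)ᴴ =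
      U' * diagonal (fun i => (r' i : ℂ)) * U'ᴴ)
    (hσ : ∑ l, N l * (V * diagonal (fun i => (s i : ℂ)) * Vᴴ) * (N l)ᴴ =
      V' * diagonal (fun i => (s' i : ℂ)) * V'ᴴ)
    (hsum : ∑ i, s i = ∑ i, s' i) :
    ∑ i, r' i * Real.log (r' i) - ∑ j, s' j * Real.log (s' j) ≤
    ∑ i, r i * Real.log (r i) - ∑ j, s j * Real.log (s j) := by
  rw [← qdi_split U V hU hV r s hd, ← qdi_split U' V' hU' hV' r' s' hd']
  have pos : ∀ {n : Type} [Fintype n] [DecidableEq n] (U : Matrix n n ℂ) (r : n → ℝ)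
      (_ : ∀ i, 0 ≤ r i), (U * diagonal (fun i => (r i : ℂ)) * Uᴴ).PosSemidef := by
    intro n _ _ U r hr
    apply PosSemidef.mul_mul_conjTranspose_same
    apply PosSemidef.diagonal
    intro i
    simpa using hr i
  have zero : ∀ {n : Type} [Fintype n] [DecidableEq n] (U V : Matrix n n ℂ) (r s : n → ℝ)
      (_ : ∀ i, 0 ≤ r i)
      (_ : ∀ j, (Vᴴ * (U * diagonal (fun i => (r i : ℂ)) * Uᴴ) * V) j j = s j),
      ∀ k : n × n, s k.2 = 0 → Complex.normSq ((Uᴴ * V) k.1 k.2) * r k.1 = 0 := by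
    intro n _ _ U V r s hr hd k hk
    have := qdi_colsum U V r s hd k.2
    rw [hk, Finset.sum_eq_zero_iff_of_nonneg
      (fun i _ => mul_nonneg (Complex.normSq_nonneg _) (hr i))] at this
    exact this k.1 (Finset.mem_univ _)
  refine qdi_real _ (fun k : n × n => r k.1) (fun k => s k.2) _ (fun k : m × m => r' k.1)
    (fun k => s' k.2) (fun k => hr _) (fun k => hs _) (zero U V r s hr hd) (fun k => hr' _)
    (fun k => hs' _) (zero U' V' r' s' hr' hd') ?_ ?_
  · rw [Fintype.sum_prod_type_right, Fintype.sum_prod_type_right]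
    simp only
    simp only [qdi_colsum U V r s hd, qdi_colsum U' V' r' s' hd', hsum]
  · intro t ht
    obtain ⟨Y, hY⟩ := qdi_F_eq U' V' hU' hV' r' s' hr' hs' t ht
    rw [← hY, ← hρ, ← hσ]
    exact (qdi_Q_mono _ _ (pos U r hr) (pos V s hs) N hN t ht Y).trans
      (qdi_F_le U V hU hV r s hr hs t ht _)
end

lemma qdi_spectral {n : Type} [Fintype n] [DecidableEq n] (M : Matrix n n ℂ) (hM : M.PosSemidef) :
    ∃ (U : Matrix n n ℂ) (r : n → ℝ), Uᴴ * U = 1 ∧ (∀ i, 0 ≤ r i) ∧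
      M = U * diagonal (fun i => (r i : ℂ)) * Uᴴ ∧
      vnEntropy M = -(∑ i, r i * Real.log (r i)) / Real.log 2 ∧
      M.trace = ((∑ i, r i : ℝ) : ℂ) := by
  refine ⟨hM.1.eigenvectorUnitary, hM.1.eigenvalues, ?_, hM.eigenvalues_nonneg, ?_, ?_, ?_⟩
  · exact Unitary.coe_star_mul_self hM.1.eigenvectorUnitary
  · exact hM.1.spectral_theorem
  · rw [vnEntropy, dif_pos hM.1, neg_div, Finset.sum_div]
    simp only [Real.logb, mul_div_assoc]
  · rw [hM.1.trace_eq_sum_eigenvalues]; simp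

/-- block diagonal matrix with blocks indexed by the first factor -/
def qdiV {A B : Type} [DecidableEq A] (g : A → Matrix B B ℂ) : Matrix (A × B) (A × B) ℂ :=
  Matrix.of fun p q => if p.1 = q.1 then g p.1 p.2 q.2 else 0

section
variable {A B : Type} [Fintype A] [Fintype B] [DecidableEq A] [DecidableEq B]

lemma qdiV_mul (g h : A → Matrix B B ℂ) : qdiV g * qdiV h = qdiV (fun i => g i * h i) := by
  ext ⟨a, b⟩ ⟨a', b'⟩
  simp only [qdiV, Matrix.mul_apply, of_apply, Fintype.sum_prod_type]
  rw [Finset.sum_eq_single a]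
  · by_cases h : a = a' <;> simp [h]
  · intro x _ hx
    simp [hx.symm]
  · simp

lemma qdiV_star (g : A → Matrix B B ℂ) : (qdiV g)ᴴ = qdiV (fun i => (g i)ᴴ) := by
  ext ⟨a, b⟩ ⟨a', b'⟩
  by_cases h : a = a'
  · simp [qdiV, h]
  · simp [qdiV, h, Ne.symm h]

lemma qdiV_one : qdiV (fun _ : A => (1 : Matrix B B ℂ)) = 1 := by
  ext ⟨a, b⟩ ⟨a', b'⟩
  by_cases h : a = a'
  · simp [qdiV, h, Matrix.one_apply]
  · simp [qdiV, h, Matrix.one_apply]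

lemma qdiV_diag (s : A → B → ℝ) : diagonal (fun k : A × B => (s k.1 k.2 : ℂ)) =
    qdiV (fun i => diagonal (fun j => (s i j : ℂ))) := by
  ext ⟨a, b⟩ ⟨a', b'⟩
  by_cases h : a = a'
  · simp [qdiV, h, Matrix.diagonal_apply]
  · simp [qdiV, h, Matrix.diagonal_apply]

lemma qdiV_conj_diag (g : A → Matrix B B ℂ) (ρ : Matrix (A × B) (A × B) ℂ) (i : A) (j : B) :
    ((qdiV g)ᴴ * ρ * qdiV g) (i, j) (i, j) =
      ((g i)ᴴ * (Matrix.of fun b b' => ρ (i, b) (i, b')) * g i) j j := by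
  rw [qdiV_star]
  simp only [qdiV, Matrix.mul_apply, of_apply, Fintype.sum_prod_type]
  rw [Finset.sum_eq_single i]
  · refine Finset.sum_congr rfl fun b _ => ?_
    rw [Finset.sum_eq_single i]
    · simp
    · intro x _ hx
      simp [hx.symm]
    · simp
  · intro x _ hx
    simp [hx]
  · simp

lemma qdi_block_psd (ρ : Matrix (A × B) (A × B) ℂ) (hρ : ρ.PosSemidef) (i : A) :
    (Matrix.of fun b b' => ρ (i, b) (i, b')).PosSemidef :=
  hρ.submatrix (fun b => (i, b))

lemma qdi_trace_block (ρ : Matrix (A × B) (A × B) ℂ) (hρ : ρ.PosSemidef) (i : A) :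
    (Matrix.of fun b b' => ρ (i, b) (i, b')).trace = (probA ρ i : ℂ) ∧ 0 ≤ probA ρ i := by
  have h := (qdi_block_psd ρ hρ i).trace_nonneg
  have h2 := Complex.le_def.1 h
  refine ⟨?_, h2.1⟩
  apply Complex.ext
  · rfl
  · exact h2.2.symm

lemma qdi_block_eq (ρ : Matrix (A × B) (A × B) ℂ) (hρ : ρ.PosSemidef) (i : A) :
    (Matrix.of fun b b' => ρ (i, b) (i, b')) = (probA ρ i : ℂ) • condB ρ i := by
  obtain ⟨h1, h2⟩ := qdi_trace_block ρ hρ i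
  by_cases h : probA ρ i = 0
  · rw [h, Complex.ofReal_zero] at h1 ⊢
    rw [zero_smul]
    exact (qdi_block_psd ρ hρ i).trace_eq_zero_iff.1 h1
  · have : (probA ρ i : ℂ) ≠ 0 := by exact_mod_cast h
    rw [condB, smul_smul, mul_inv_cancel₀ this, one_smul]

lemma qdi_deph_spectral (ρ : Matrix (A × B) (A × B) ℂ) (hρ : ρ.PosSemidef) :
    ∃ (V : Matrix (A × B) (A × B) ℂ) (s : A × B → ℝ), Vᴴ * V = 1 ∧ (∀ k, 0 ≤ s k) ∧
      dephA ρ = V * diagonal (fun i => (s i : ℂ)) * Vᴴ ∧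
      (∀ k, (Vᴴ * ρ * V) k k = s k) ∧ ∑ k, s k = ∑ i, probA ρ i ∧
      ∑ k, s k * Real.log (s k) = ∑ i, probA ρ i * Real.log (probA ρ i) -
        Real.log 2 * ∑ i, probA ρ i * vnEntropy (condB ρ i) := by
  have hc : ∀ i, (condB ρ i).PosSemidef := by
    intro i
    apply (qdi_block_psd ρ hρ i).smul
    have h : 0 ≤ (probA ρ i)⁻¹ := inv_nonneg.2 (qdi_trace_block ρ hρ i).2
    rw [← Complex.ofReal_inv]
    exact_mod_cast h
  choose g l hg hl hgl hS htr using fun i => qdi_spectral _ (hc i)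
  have hblock : ∀ i, (Matrix.of fun b b' => ρ (i, b) (i, b')) =
      g i * diagonal (fun j => ((probA ρ i * l i j : ℝ) : ℂ)) * (g i)ᴴ := by
    intro i
    rw [qdi_block_eq ρ hρ i]
    conv_lhs => rw [hgl i]
    have : diagonal (fun j => ((probA ρ i * l i j : ℝ) : ℂ)) =
      (probA ρ i : ℂ) • diagonal (fun j => (l i j : ℂ)) := by
      ext a b
      by_cases h : a = b <;> simp [Matrix.diagonal_apply, h]
    rw [this, Matrix.mul_smul, Matrix.smul_mul]
  have hpl : ∀ i, ∑ j, probA ρ i * l i j = probA ρ i := by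
    intro i
    have h1 := (qdi_trace_block ρ hρ i).1
    rw [qdi_block_eq ρ hρ i, trace_smul, htr i, smul_eq_mul] at h1
    rw [← Finset.mul_sum]
    exact_mod_cast h1
  refine ⟨qdiV g, fun k => probA ρ k.1 * l k.1 k.2, ?_, ?_, ?_, ?_, ?_, ?_⟩
  · rw [qdiV_star, qdiV_mul]
    simp only [hg]
    exact qdiV_one
  · intro k
    exact mul_nonneg (qdi_trace_block ρ hρ _).2 (hl _ _)
  · rw [qdiV_diag (fun i j => probA ρ i * l i j), qdiV_star, qdiV_mul, qdiV_mul]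
    simp only [← hblock]
    ext ⟨a, b⟩ ⟨a', b'⟩
    by_cases h : a = a'
    · simp [qdiV, dephA, h]
    · simp [qdiV, dephA, h]
  · rintro ⟨i, j⟩
    rw [qdiV_conj_diag, hblock]
    have : (g i)ᴴ * (g i * diagonal (fun j => ((probA ρ i * l i j : ℝ) : ℂ)) * (g i)ᴴ) * g i =
      ((g i)ᴴ * g i) * diagonal (fun j => ((probA ρ i * l i j : ℝ) : ℂ)) * ((g i)ᴴ * g i) := by
      simp only [Matrix.mul_assoc]
    rw [this, hg]
    simp
  · rw [Fintype.sum_prod_type]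
    exact Finset.sum_congr rfl fun i _ => hpl i
  · rw [Fintype.sum_prod_type, Finset.mul_sum, ← Finset.sum_sub_distrib]
    refine Finset.sum_congr rfl fun i _ => ?_
    have h2 : Real.log 2 ≠ 0 := (Real.log_pos (by norm_num)).ne'
    rw [hS i]
    have e : ∀ j, probA ρ i * l i j * Real.log (probA ρ i * l i j) =
        probA ρ i * l i j * Real.log (probA ρ i) + probA ρ i * (l i j * Real.log (l i j)) := by
      intro j
      by_cases h : probA ρ i = 0
      · simp [h]
      by_cases h' : l i j = 0
      · simp [h']
      rw [Real.log_mul h h']; ring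
    simp only [e, Finset.sum_add_distrib, ← Finset.sum_mul, hpl, ← Finset.mul_sum]
    field_simp
    ring

variable {B' L : Type} [Fintype B'] [Fintype L] [DecidableEq B']

lemma qdi_chan_apply (K : L → Matrix B' B ℂ) (ρ : Matrix (A × B) (A × B) ℂ)
    (a a' : A) (b b' : B') :
    (∑ l, ((1 : Matrix A A ℂ) ⊗ₖ K l) * ρ * ((1 : Matrix A A ℂ) ⊗ₖ K l)ᴴ) (a, b) (a', b') =
    ∑ l, (K l * (Matrix.of fun c c' => ρ (a, c) (a', c')) * (K l)ᴴ) b b' := by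
  rw [Matrix.sum_apply]
  refine Finset.sum_congr rfl fun l _ => ?_
  simp only [Matrix.mul_apply, Fintype.sum_prod_type, kroneckerMap_apply, conjTranspose_apply,
    of_apply]
  rw [Finset.sum_eq_single a']
  · refine Finset.sum_congr rfl fun c _ => ?_
    rw [Finset.sum_eq_single a]
    · simp
    · intro x _ hx
      simp [Matrix.one_apply, hx.symm]
    · simp
  · intro x _ hx
    simp [Matrix.one_apply, hx.symm]
  · simp

lemma qdi_chan_deph (K : L → Matrix B' B ℂ) (ρ : Matrix (A × B) (A × B) ℂ) :
    ∑ l, ((1 : Matrix A A ℂ) ⊗ₖ K l) * dephA ρ * ((1 : Matrix A A ℂ) ⊗ₖ K l)ᴴ =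
    dephA (∑ l, ((1 : Matrix A A ℂ) ⊗ₖ K l) * ρ * ((1 : Matrix A A ℂ) ⊗ₖ K l)ᴴ) := by
  ext ⟨a, b⟩ ⟨a', b'⟩
  rw [qdi_chan_apply]
  simp only [dephA, of_apply]
  rw [qdi_chan_apply]
  by_cases h : a = a'
  · simp [h]
  · simp only [h, if_false]
    refine Finset.sum_eq_zero fun l _ => ?_
    have : (Matrix.of fun (_ : B) (_ : B) => (0 : ℂ)) = 0 := rfl
    rw [this]
    simp

lemma qdi_chan_ptr (K : L → Matrix B' B ℂ) (hK : ∑ l, (K l)ᴴ * K l = 1)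
    (ρ : Matrix (A × B) (A × B) ℂ) :
    ptrB (∑ l, ((1 : Matrix A A ℂ) ⊗ₖ K l) * ρ * ((1 : Matrix A A ℂ) ⊗ₖ K l)ᴴ) = ptrB ρ := by
  ext a a'
  simp only [ptrB, of_apply, qdi_chan_apply]
  rw [Finset.sum_comm]
  have : ∀ l, ∑ b, (K l * (Matrix.of fun c c' => ρ (a, c) (a', c')) * (K l)ᴴ) b b =
      ((K l)ᴴ * K l * (Matrix.of fun c c' => ρ (a, c) (a', c'))).trace := by
    intro l
    rw [Matrix.mul_assoc (K l)ᴴ, Matrix.trace_mul_comm (K l)ᴴ]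
    rfl
  simp only [this]
  rw [← trace_sum, ← Finset.sum_mul, hK, Matrix.one_mul]
  rfl

lemma qdi_chan_one (K : L → Matrix B' B ℂ) (hK : ∑ l, (K l)ᴴ * K l = 1) :
    ∑ l, ((1 : Matrix A A ℂ) ⊗ₖ K l)ᴴ * ((1 : Matrix A A ℂ) ⊗ₖ K l) = 1 := by
  have : ∀ l, ((1 : Matrix A A ℂ) ⊗ₖ K l)ᴴ * ((1 : Matrix A A ℂ) ⊗ₖ K l) =
      (1 : Matrix A A ℂ) ⊗ₖ ((K l)ᴴ * K l) := by
    intro l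
    rw [conjTranspose_kronecker, ← mul_kronecker_mul]
    simp
  simp only [this]
  have e : ∑ l, (1 : Matrix A A ℂ) ⊗ₖ ((K l)ᴴ * K l) =
      (1 : Matrix A A ℂ) ⊗ₖ (∑ l, (K l)ᴴ * K l) := by
    ext p q
    simp [Matrix.sum_apply, Finset.mul_sum]
  rw [e, hK, one_kronecker_one]

lemma qdi_main (ρ : Matrix (A × B) (A × B) ℂ) (hρ : ρ.PosSemidef)
    (K : L → Matrix B' B ℂ) (hK : ∑ l, (K l)ᴴ * K l = 1) :
    QDI (∑ l, ((1 : Matrix A A ℂ) ⊗ₖ K l) * ρ * ((1 : Matrix A A ℂ) ⊗ₖ K l)ᴴ) ≤ QDI ρ := by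
  have hptr := qdi_chan_ptr K hK ρ
  have hone := qdi_chan_one (A := A) K hK
  have hdeph := qdi_chan_deph K ρ
  have hpsd : (∑ l, ((1 : Matrix A A ℂ) ⊗ₖ K l) * ρ * ((1 : Matrix A A ℂ) ⊗ₖ K l)ᴴ).PosSemidef :=
    posSemidef_sum _ fun l _ => hρ.mul_mul_conjTranspose_same _
  generalize hτ : ∑ l, ((1 : Matrix A A ℂ) ⊗ₖ K l) * ρ * ((1 : Matrix A A ℂ) ⊗ₖ K l)ᴴ = τ at *
  have hp : ∀ i, probA τ i = probA ρ i := fun i =>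
    congrArg Complex.re (congrFun (congrFun hptr i) i)
  obtain ⟨U, r, hU, hr, hUr, hSr, -⟩ := qdi_spectral ρ hρ
  obtain ⟨U', r', hU', hr', hUr', hSr', -⟩ := qdi_spectral τ hpsd
  obtain ⟨V, s, hV, hs, hVs, hd, hsum, hSs⟩ := qdi_deph_spectral ρ hρ
  obtain ⟨V', s', hV', hs', hVs', hd', hsum', hSs'⟩ := qdi_deph_spectral τ hpsd
  have := qdi_DPI (fun l => (1 : Matrix A A ℂ) ⊗ₖ K l) hone U V hU hV r s hr hs
    (by rw [← hUr]; exact hd) U' V' hU' hV' r' s' hr' hs' (by rw [← hUr']; exact hd')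
    (by rw [← hUr, ← hUr']; exact hτ) (by rw [← hVs, ← hVs']; exact hdeph)
    (by rw [hsum, hsum']; simp only [hp])
  rw [hSs, hSs'] at this
  unfold QDI
  rw [hptr, hSr, hSr']
  simp only [hp] at this ⊢
  have h2 : 0 < Real.log 2 := Real.log_pos (by norm_num)
  have h3 : ∀ x y : ℝ, x + vnEntropy (ptrB ρ) - -y / Real.log 2 =
      vnEntropy (ptrB ρ) + (y + Real.log 2 * x) / Real.log 2 := by
    intro x y
    field_simp
    ring
  rw [h3, h3]
  gcongr vnEntropy (ptrB ρ) + ?_ / Real.log 2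
  linarith
end

end QDIaux

/-- QDI measured on `A` cannot be increased by a local quantum channel
(given by Kraus operators `K_l`, possibly changing the dimension) acting on `B`. -/
theorem stmt11 {dA dB dB'' L : ℕ}
    (ρ : Matrix (Fin dA × Fin dB) (Fin dA × Fin dB) ℂ) (hρ : IsDensityMatrix ρ)
    (K : Fin L → Matrix (Fin dB'') (Fin dB) ℂ)
    (hK : ∑ l, (K l)ᴴ * K l = 1) :
    QDI (∑ l, ((1 : Matrix (Fin dA) (Fin dA) ℂ) ⊗ₖ K l) * ρ *
        ((1 : Matrix (Fin dA) (Fin dA) ℂ) ⊗ₖ K l)ᴴ) ≤ QDI ρ := by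
  exact qdi_main ρ hρ.1 K hK
end
end

section
/- Let |Ψ⟩ = (|00⟩ + |01⟩ + |10⟩ − |11⟩)/2 ∈ ℂ²⊗ℂ² (this is the maximally entangled state (|+0⟩+|−1⟩)/√2 with |±⟩ = (|0⟩±|1⟩)/√2) and let ρ^m_AB = |Ψ⟩⟨Ψ|. Then D_{B|A}(ρ^m_AB) = 1 and D_{B|A}((id_A⊗Δ_B)(ρ^m_AB)) = 1; in particular, the completely dephasing map on B causes an equal decrease in the total correlation and in the incoherent correlation. -/
open Matrix Kronecker BigOperators
open scoped ComplexOrder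

noncomputable section

/-- The maximally entangled state `|Ψ⟩ = (|00⟩+|01⟩+|10⟩−|11⟩)/2 = (|+0⟩+|−1⟩)/√2`. -/
def PsiM : Fin 2 × Fin 2 → ℂ :=
  fun p => if p = (1, 1) then -(1 / 2) else (1 / 2)

/-- Entropy of a unit-trace Hermitian matrix proportional to a projector. -/
theorem vnEntropy_of_proj {n : Type*} [Fintype n] [DecidableEq n] (ρ : Matrix n n ℂ) (c : ℝ)
    (h : ρ.IsHermitian) (hc : ρ * ρ = (c : ℂ) • ρ) (ht : ρ.trace = 1) :
    vnEntropy ρ = - Real.logb 2 c := by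
  have key : ∀ k, h.eigenvalues k * Real.logb 2 (h.eigenvalues k)
      = h.eigenvalues k * Real.logb 2 c := by
    intro k
    have h1 := h.mulVec_eigenvectorBasis k
    set v : n → ℂ := ⇑(h.eigenvectorBasis k) with hv
    have hv0 : v ≠ 0 := by
      intro h0
      have hn := h.eigenvectorBasis.orthonormal.ne_zero k
      apply hn
      ext i
      exact congrFun h0 i
    obtain ⟨i, hi⟩ := Function.ne_iff.mp hv0
    have h2 : (ρ * ρ) *ᵥ v = ((c : ℂ) • ρ) *ᵥ v := by rw [hc]
    rw [← Matrix.mulVec_mulVec, Matrix.smul_mulVec, h1, Matrix.mulVec_smul, h1] at h2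
    have h3 := congrFun h2 i
    simp only [Pi.smul_apply, Complex.real_smul, smul_eq_mul] at h3
    have h4 : (h.eigenvalues k : ℂ) * h.eigenvalues k = c * h.eigenvalues k := by
      apply mul_right_cancel₀ hi
      linear_combination h3
    have h5 : h.eigenvalues k * h.eigenvalues k = c * h.eigenvalues k := by exact_mod_cast h4
    by_cases h0 : h.eigenvalues k = 0
    · simp [h0]
    · rw [mul_right_cancel₀ h0 h5]
  have hs : ∑ k, h.eigenvalues k = 1 := by
    have := h.trace_eq_sum_eigenvalues
    rw [ht] at this
    have h6 : (1 : ℂ) = ((∑ k, h.eigenvalues k : ℝ) : ℂ) := by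
      rw [this]; push_cast; rfl
    exact_mod_cast h6.symm
  rw [vnEntropy, dif_pos h, Finset.sum_congr rfl (fun k _ => key k), ← Finset.sum_mul, hs, one_mul]

theorem logb_two_half : Real.logb 2 ((1 / 2 : ℝ)) = -1 := by
  rw [one_div, Real.logb_inv, Real.logb_self_eq_one (by norm_num)]

theorem conj_two : (starRingEnd ℂ) 2 = 2 := map_ofNat _ 2

theorem probA_pure (i : Fin 2) :
    probA (Matrix.vecMulVec PsiM (star PsiM)) i = 1 / 2 := by
  fin_cases i <;> simp [probA, PsiM, Matrix.vecMulVec_apply] <;> norm_num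

theorem probA_deph (i : Fin 2) :
    probA (dephB (Matrix.vecMulVec PsiM (star PsiM))) i = 1 / 2 := by
  fin_cases i <;> simp [probA, dephB, PsiM, Matrix.vecMulVec_apply] <;> norm_num

theorem condB_deph (i : Fin 2) :
    condB (dephB (Matrix.vecMulVec PsiM (star PsiM))) i =
      Matrix.of fun b b' => if b = b' then (1 / 2 : ℂ) else 0 := by
  rw [condB, probA_deph]
  ext b b'
  fin_cases i <;> fin_cases b <;> fin_cases b' <;>
    simp [dephB, PsiM, Matrix.vecMulVec_apply, conj_two]

set_option maxHeartbeats 4000000 in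
/-- for `ρ^m = |Ψ⟩⟨Ψ|`, `D_{B|A}(ρ^m) = 1` and
`D_{B|A}((id⊗Δ_B)(ρ^m)) = 1`. -/
theorem stmt12 :
    QDI (Matrix.vecMulVec PsiM (star PsiM)) = 1 ∧
      QDI (dephB (Matrix.vecMulVec PsiM (star PsiM))) = 1 := by
  constructor
  · have h1 : ∀ i, vnEntropy (condB (Matrix.vecMulVec PsiM (star PsiM)) i) = 0 := by
      intro i
      rw [vnEntropy_of_proj _ 1]
      · simp
      · ext a b
        fin_cases i <;> fin_cases a <;> fin_cases b <;>
          simp [condB, probA_pure, PsiM, Matrix.vecMulVec_apply, conj_two] <;> norm_num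
      · ext a b
        fin_cases i <;> fin_cases a <;> fin_cases b <;>
          simp [condB, probA_pure, PsiM, Matrix.vecMulVec_apply, conj_two, Matrix.mul_apply] <;> norm_num
      · fin_cases i <;>
          simp [condB, probA_pure, PsiM, Matrix.vecMulVec_apply, conj_two, Matrix.trace] <;> norm_num
    have h2 : vnEntropy (ptrB (Matrix.vecMulVec PsiM (star PsiM))) = 1 := by
      rw [vnEntropy_of_proj _ (1 / 2), logb_two_half, neg_neg]
      · ext a b
        fin_cases a <;> fin_cases b <;> simp [ptrB, PsiM, Matrix.vecMulVec_apply, conj_two] <;> norm_num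
      · ext a b
        fin_cases a <;> fin_cases b <;>
          simp [ptrB, PsiM, Matrix.vecMulVec_apply, conj_two, Matrix.mul_apply] <;> norm_num
      · simp [ptrB, PsiM, Matrix.vecMulVec_apply, conj_two, Matrix.trace] <;> norm_num
    have h3 : vnEntropy (Matrix.vecMulVec PsiM (star PsiM)) = 0 := by
      rw [vnEntropy_of_proj _ 1]
      · simp
      · ext a b
        simp [Matrix.vecMulVec_apply, conj_two, mul_comm]
      · ext ⟨a, a'⟩ ⟨b, b'⟩
        fin_cases a <;> fin_cases b <;> fin_cases a' <;> fin_cases b' <;>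
          simp [PsiM, Matrix.vecMulVec_apply, conj_two, Matrix.mul_apply, Fintype.sum_prod_type] <;> norm_num
      · simp [PsiM, Matrix.vecMulVec_apply, conj_two, Matrix.trace, Fintype.sum_prod_type] <;> norm_num
    simp [QDI, h1, h2, h3]
  · have h1 : ∀ i, vnEntropy (condB (dephB (Matrix.vecMulVec PsiM (star PsiM))) i) = 1 := by
      intro i
      rw [vnEntropy_of_proj _ (1 / 2), logb_two_half, neg_neg]
      · ext a b
        fin_cases i <;> fin_cases a <;> fin_cases b <;>
          simp [condB_deph, PsiM, Matrix.vecMulVec_apply, conj_two] <;> norm_num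
      · ext a b
        fin_cases i <;> fin_cases a <;> fin_cases b <;>
          simp [condB_deph, PsiM, Matrix.vecMulVec_apply, conj_two, Matrix.mul_apply] <;>
          norm_num
      · fin_cases i <;>
          simp [condB_deph, PsiM, Matrix.vecMulVec_apply, conj_two, Matrix.trace] <;> norm_num
    have h2 : vnEntropy (ptrB (dephB (Matrix.vecMulVec PsiM (star PsiM)))) = 1 := by
      rw [vnEntropy_of_proj _ (1 / 2), logb_two_half, neg_neg]
      · ext a b
        fin_cases a <;> fin_cases b <;> simp [ptrB, dephB, PsiM, Matrix.vecMulVec_apply, conj_two] <;> norm_num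
      · ext a b
        fin_cases a <;> fin_cases b <;>
          simp [ptrB, dephB, PsiM, Matrix.vecMulVec_apply, conj_two, Matrix.mul_apply] <;> norm_num
      · simp [ptrB, dephB, PsiM, Matrix.vecMulVec_apply, conj_two, Matrix.trace] <;> norm_num
    have h3 : vnEntropy (dephB (Matrix.vecMulVec PsiM (star PsiM))) = 1 := by
      rw [vnEntropy_of_proj _ (1 / 2), logb_two_half, neg_neg]
      · ext ⟨a, a'⟩ ⟨b, b'⟩
        fin_cases a <;> fin_cases b <;> fin_cases a' <;> fin_cases b' <;>
          simp [dephB, PsiM, Matrix.vecMulVec_apply, conj_two] <;> norm_num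
      · ext ⟨a, a'⟩ ⟨b, b'⟩
        fin_cases a <;> fin_cases b <;> fin_cases a' <;> fin_cases b' <;>
          simp [dephB, PsiM, Matrix.vecMulVec_apply, conj_two, Matrix.mul_apply, Fintype.sum_prod_type] <;>
          norm_num
      · simp [dephB, PsiM, Matrix.vecMulVec_apply, conj_two, Matrix.trace, Fintype.sum_prod_type] <;>
          norm_num
    simp [QDI, h1, h2, h3, probA_deph]
end
end

section
/- Let ρ^GHZ_ABB' = |GHZ⟩⟨GHZ| with |GHZ⟩ = (|000⟩ + |111⟩)/√2 ∈ ℂ²⊗ℂ²⊗ℂ². Then D_{B|A}(ρ^GHZ_AB) + D_{B'|A}(ρ^GHZ_AB') − D_{BB'|A}(ρ^GHZ_ABB') = −1, where ρ^GHZ_AB = tr_{B'}(ρ^GHZ_ABB') and ρ^GHZ_AB' = tr_B(ρ^GHZ_ABB'). In particular the monogamy relation for QDI fails for the GHZ state. -/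
open Matrix Kronecker BigOperators
open scoped ComplexOrder

noncomputable section

/-- The GHZ state `|GHZ⟩ = (|000⟩ + |111⟩)/√2`. -/
def ghzVec : Fin 2 × Fin 2 × Fin 2 → ℂ :=
  fun p => if p = (0, 0, 0) ∨ p = (1, 1, 1) then ((Real.sqrt 2 : ℝ) : ℂ)⁻¹ else 0

theorem vnEntropy_of_sq {n : Type*} [Fintype n] [DecidableEq n] (ρ : Matrix n n ℂ) (c t : ℝ)
    (h : ρ.IsHermitian) (hsq : ρ * ρ = (c : ℂ) • ρ) (ht : ρ.trace = (t : ℂ)) :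
    vnEntropy ρ = -(t * Real.logb 2 c) := by
  have key : ∀ k, h.eigenvalues k * Real.logb 2 (h.eigenvalues k)
      = h.eigenvalues k * Real.logb 2 c := by
    intro k
    have hv := h.mulVec_eigenvectorBasis k
    have hne : (h.eigenvectorBasis k).ofLp ≠ 0 := by
      intro h0
      have := h.eigenvectorBasis.orthonormal.ne_zero k
      exact this (by ext i; exact congrFun h0 i)
    have h2 := congrArg (fun M : Matrix n n ℂ => M *ᵥ (h.eigenvectorBasis k).ofLp) hsq
    simp only [← Matrix.mulVec_mulVec, Matrix.smul_mulVec, hv, Matrix.mulVec_smul] at h2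
    obtain ⟨i, hi⟩ := Function.ne_iff.mp hne
    have h3 := congrFun h2 i
    simp only [Pi.smul_apply, Complex.real_smul, smul_eq_mul, Pi.zero_apply] at h3 hi
    have h4 : ((h.eigenvalues k : ℂ)) * (h.eigenvalues k - c) = 0 := by
      apply mul_right_cancel₀ hi
      linear_combination h3
    rcases mul_eq_zero.mp h4 with h5 | h5
    · have : h.eigenvalues k = 0 := by exact_mod_cast h5
      rw [this]; simp
    · have : h.eigenvalues k = c := by exact_mod_cast sub_eq_zero.mp h5
      rw [this]
  have htr : ∑ k, h.eigenvalues k = t := by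
    have := h.trace_eq_sum_eigenvalues
    rw [ht] at this
    have h' : ((t : ℝ) : ℂ) = ((∑ k, h.eigenvalues k : ℝ) : ℂ) := by
      rw [this]; push_cast; rfl
    exact (Complex.ofReal_injective h').symm
  rw [vnEntropy, dif_pos h, Finset.sum_congr rfl (fun k _ => key k), ← Finset.sum_mul, htr]

theorem ghz_apply (p q : Fin 2 × Fin 2 × Fin 2) :
    Matrix.vecMulVec ghzVec (star ghzVec) p q =
      if (p = (0, 0, 0) ∨ p = (1, 1, 1)) ∧ (q = (0, 0, 0) ∨ q = (1, 1, 1)) then 1 / 2 else 0 := by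
  have hs : ((Real.sqrt 2 : ℝ) : ℂ)⁻¹ * ((Real.sqrt 2 : ℝ) : ℂ)⁻¹ = 1 / 2 := by
    rw [← mul_inv, ← Complex.ofReal_mul, Real.mul_self_sqrt (by norm_num)]; norm_num
  simp only [Matrix.vecMulVec_apply, Pi.star_apply, ghzVec]
  by_cases hp : p = (0, 0, 0) ∨ p = (1, 1, 1) <;> by_cases hq : q = (0, 0, 0) ∨ q = (1, 1, 1)
  · simp only [hp, hq, if_true, and_self, RCLike.star_def, map_inv₀, Complex.conj_ofReal, hs]
  all_goals simp [hp, hq]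

/-- The reduced two-qubit state. -/
def redAB : Matrix (Fin 2 × Fin 2) (Fin 2 × Fin 2) ℂ :=
  Matrix.of fun p q => if p = q ∧ p.1 = p.2 then 1 / 2 else 0

theorem ptrB2_ghz : ptrB2 (Matrix.vecMulVec ghzVec (star ghzVec)) = redAB := by
  ext ⟨a, b⟩ ⟨c, d⟩
  simp only [ptrB2, Matrix.of_apply, ghz_apply, redAB]
  fin_cases a <;> fin_cases b <;> fin_cases c <;> fin_cases d <;> simp

theorem ptrB1_ghz : ptrB1 (Matrix.vecMulVec ghzVec (star ghzVec)) = redAB := by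
  ext ⟨a, b⟩ ⟨c, d⟩
  simp only [ptrB1, Matrix.of_apply, ghz_apply, redAB]
  fin_cases a <;> fin_cases b <;> fin_cases c <;> fin_cases d <;> simp

theorem vnEntropy_half : vnEntropy ((1 / 2 : ℂ) • (1 : Matrix (Fin 2) (Fin 2) ℂ)) = 1 := by
  rw [vnEntropy_of_sq _ (1 / 2) 1]
  · rw [one_div, Real.logb_inv]; simp
  · ext i j
    fin_cases i <;> fin_cases j <;> simp
  · simp
  · simp

theorem QDI_red : QDI redAB = 0 := by
  have hA : ptrB redAB = (1 / 2 : ℂ) • (1 : Matrix (Fin 2) (Fin 2) ℂ) := by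
    ext i j
    fin_cases i <;> fin_cases j <;> simp [ptrB, redAB]
  have hp : ∀ i, probA redAB i = 1 / 2 := by
    intro i
    fin_cases i <;> simp [probA, redAB]
  have hc : ∀ i, vnEntropy (condB redAB i) = 0 := by
    intro i
    have hc' : condB redAB i = Matrix.of fun b b' => if b = i ∧ b' = i then 1 else 0 := by
      ext b b'
      simp only [condB, hp]
      fin_cases i <;> fin_cases b <;> fin_cases b' <;> simp [redAB]
    rw [hc', vnEntropy_of_sq _ 1 1]
    · simp
    · ext b b'
      fin_cases i <;> fin_cases b <;> fin_cases b' <;> simp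
    · ext b b'
      fin_cases i <;> fin_cases b <;> fin_cases b' <;> simp [Matrix.mul_apply]
    · fin_cases i <;> simp [Matrix.trace]
  have hS : vnEntropy redAB = 1 := by
    rw [vnEntropy_of_sq _ (1 / 2) 1]
    · rw [one_div, Real.logb_inv]; simp
    · ext ⟨a, b⟩ ⟨c, d⟩
      fin_cases a <;> fin_cases b <;> fin_cases c <;> fin_cases d <;> simp [redAB]
    · ext ⟨a, b⟩ ⟨c, d⟩
      fin_cases a <;> fin_cases b <;> fin_cases c <;> fin_cases d <;>
        simp [redAB, Matrix.mul_apply, Fintype.sum_prod_type]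
    · simp [redAB, Matrix.trace, Fintype.sum_prod_type]; try norm_num
  rw [QDI, hA, vnEntropy_half, hS]
  simp [hc]

theorem QDI_ghz : QDI (Matrix.vecMulVec ghzVec (star ghzVec)) = 1 := by
  have hA : ptrB (Matrix.vecMulVec ghzVec (star ghzVec))
      = (1 / 2 : ℂ) • (1 : Matrix (Fin 2) (Fin 2) ℂ) := by
    ext i j
    simp only [ptrB, Matrix.of_apply, ghz_apply, Fintype.sum_prod_type]
    fin_cases i <;> fin_cases j <;> simp
  have hp : ∀ i, probA (Matrix.vecMulVec ghzVec (star ghzVec)) i = 1 / 2 := by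
    intro i
    simp only [probA, ghz_apply, Fintype.sum_prod_type]
    fin_cases i <;> simp
  have hc : ∀ i, vnEntropy (condB (Matrix.vecMulVec ghzVec (star ghzVec)) i) = 0 := by
    intro i
    have hc' : condB (Matrix.vecMulVec ghzVec (star ghzVec)) i
        = Matrix.of fun b b' => if b = (i, i) ∧ b' = (i, i) then 1 else 0 := by
      ext ⟨a, b⟩ ⟨c, d⟩
      simp only [condB, hp, Matrix.smul_apply, Matrix.of_apply, ghz_apply]
      fin_cases i <;> fin_cases a <;> fin_cases b <;> fin_cases c <;> fin_cases d <;> simp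
    rw [hc', vnEntropy_of_sq _ 1 1]
    · simp
    · ext b b'
      simp [Matrix.conjTranspose_apply, and_comm, apply_ite]
    · ext b b'
      simp [Matrix.mul_apply, ite_and]
      split_ifs <;> rfl
    · simp [Matrix.trace]
  have hv : star ghzVec ⬝ᵥ ghzVec = 1 := by
    have h1 : (Matrix.vecMulVec ghzVec (star ghzVec)).trace = 1 := by
      simp only [Matrix.trace, Matrix.diag_apply, ghz_apply, Fintype.sum_prod_type]
      simp
      try norm_num
    rw [Matrix.trace_vecMulVec, dotProduct_comm] at h1
    exact h1
  have hS : vnEntropy (Matrix.vecMulVec ghzVec (star ghzVec)) = 0 := by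
    rw [vnEntropy_of_sq _ 1 1]
    · simp
    · exact (Matrix.posSemidef_vecMulVec_self_star ghzVec).isHermitian
    · rw [Matrix.vecMulVec_mul_vecMulVec, hv]; simp
    · rw [Matrix.trace_vecMulVec, dotProduct_comm, hv]; simp
  rw [QDI, hA, vnEntropy_half, hS]
  simp [hc]

/-- the monogamy relation for QDI fails for the GHZ state:
`D_{B|A}(ρ_AB) + D_{B'|A}(ρ_AB') − D_{BB'|A}(ρ_ABB') = −1`. -/
theorem stmt13 :
    QDI (ptrB2 (Matrix.vecMulVec ghzVec (star ghzVec))) +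
      QDI (ptrB1 (Matrix.vecMulVec ghzVec (star ghzVec))) -
      QDI (Matrix.vecMulVec ghzVec (star ghzVec)) = -1 := by
  rw [ptrB2_ghz, ptrB1_ghz, QDI_red, QDI_ghz]; norm_num
end
end

section
/- Let ρ^W_ABB' = |W⟩⟨W| with |W⟩ = (|001⟩ + |010⟩ + |100⟩)/√3 ∈ ℂ²⊗ℂ²⊗ℂ². Then D_{B|A}(ρ^W_AB) + D_{B'|A}(ρ^W_AB') − D_{BB'|A}(ρ^W_ABB') = 2 − log₂3 > 0, where ρ^W_AB = tr_{B'}(ρ^W_ABB') and ρ^W_AB' = tr_B(ρ^W_ABB'). -/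
open Matrix Kronecker BigOperators
open scoped ComplexOrder

noncomputable section

/-- The W state `|W⟩ = (|001⟩ + |010⟩ + |100⟩)/√3`. -/
def wVec : Fin 2 × Fin 2 × Fin 2 → ℂ :=
  fun p => if p = (0, 0, 1) ∨ p = (0, 1, 0) ∨ p = (1, 0, 0)
    then ((Real.sqrt 3 : ℝ) : ℂ)⁻¹ else 0

lemma vnEntropy_idem {n : Type*} [Fintype n] [DecidableEq n] (ρ : Matrix n n ℂ)
    (h2 : ρ * ρ = ρ) : vnEntropy ρ = 0 := by
  unfold vnEntropy
  split_ifs with h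
  · rw [neg_eq_zero]
    apply Finset.sum_eq_zero
    intro k _
    have hv := h.mulVec_eigenvectorBasis k
    set v : n → ℂ := ⇑(h.eigenvectorBasis k) with hvdef
    have hne : v ≠ 0 := by
      intro h0
      apply h.eigenvectorBasis.orthonormal.ne_zero k
      ext i
      exact congrFun h0 i
    have h3 : ρ *ᵥ (ρ *ᵥ v) = ρ *ᵥ v := by rw [Matrix.mulVec_mulVec, h2]
    rw [hv, Matrix.mulVec_smul, hv, smul_smul] at h3
    have h4 := smul_left_injective ℝ hne h3
    have h5 : h.eigenvalues k * (h.eigenvalues k - 1) = 0 := by linarith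
    rcases mul_eq_zero.1 h5 with h6 | h6
    · simp [h6]
    · have : h.eigenvalues k = 1 := by linarith
      simp [this]
  · rfl

lemma vnEntropy_diag {n : Type*} [Fintype n] [DecidableEq n] (ρ P Q : Matrix n n ℂ) (d : n → ℝ)
    (hh : ρ.IsHermitian) (hQP : Q * P = 1) (hρ : ρ = P * (diagonal fun i => (d i : ℂ)) * Q) :
    vnEntropy ρ = -∑ k, d k * Real.logb 2 (d k) := by
  have h1 := hh.roots_charpoly_eq_eigenvalues
  have h2 : ρ.charpoly = (diagonal fun i => (d i : ℂ)).charpoly := by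
    rw [hρ, Matrix.charpoly_mul_comm, ← Matrix.mul_assoc, hQP, Matrix.one_mul]
  rw [h2, Matrix.charpoly_diagonal] at h1
  have h0 : (∏ i, (Polynomial.X - Polynomial.C ((d i : ℝ) : ℂ))).roots =
      Multiset.map (fun i => ((d i : ℝ) : ℂ)) Finset.univ.val := by
    have := Polynomial.roots_multiset_prod_X_sub_C
      (Multiset.map (fun i => ((d i : ℝ) : ℂ)) Finset.univ.val)
    rw [Multiset.map_map] at this
    exact this
  rw [h0] at h1
  have h3 := congrArg (fun s => (Multiset.map (fun z : ℂ => z.re * Real.logb 2 z.re) s).sum) h1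
  simp only [Multiset.map_map] at h3
  unfold vnEntropy
  rw [dif_pos hh]
  simpa using h3.symm

lemma vnEntropy_diag2 (a b : ℝ) (ρ : Matrix (Fin 2) (Fin 2) ℂ)
    (h : ρ = !![(a : ℂ), 0; 0, (b : ℂ)]) :
    vnEntropy ρ = -(a * Real.logb 2 a + b * Real.logb 2 b) := by
  rw [vnEntropy_diag ρ 1 1 ![a, b]]
  · simp
  · subst h
    ext i j
    fin_cases i <;> fin_cases j <;> simp
  · simp
  · subst h
    ext i j
    fin_cases i <;> fin_cases j <;> simp

lemma w_entry (p q : Fin 2 × Fin 2 × Fin 2) : Matrix.vecMulVec wVec (star wVec) p q =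
    if (p = (0, 0, 1) ∨ p = (0, 1, 0) ∨ p = (1, 0, 0)) ∧
      (q = (0, 0, 1) ∨ q = (0, 1, 0) ∨ q = (1, 0, 0)) then (1 / 3 : ℂ) else 0 := by
  have h3 : ((Real.sqrt 3 : ℝ) : ℂ)⁻¹ * ((Real.sqrt 3 : ℝ) : ℂ)⁻¹ = 1 / 3 := by
    rw [← mul_inv, ← Complex.ofReal_mul, Real.mul_self_sqrt (by norm_num)]
    norm_num
  by_cases hp : p = (0, 0, 1) ∨ p = (0, 1, 0) ∨ p = (1, 0, 0) <;>
  by_cases hq : q = (0, 0, 1) ∨ q = (0, 1, 0) ∨ q = (1, 0, 0) <;>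
  simp [Matrix.vecMulVec_apply, wVec, hp, hq, Complex.conj_ofReal, h3] <;>
  simpa using h3

def wAB : Matrix (Fin 2 × Fin 2) (Fin 2 × Fin 2) ℂ := Matrix.of fun p q =>
  if p = (0, 0) ∧ q = (0, 0) then 1 / 3 else
  if (p = (0, 1) ∨ p = (1, 0)) ∧ (q = (0, 1) ∨ q = (1, 0)) then 1 / 3 else 0

def wP : Matrix (Fin 2 × Fin 2) (Fin 2 × Fin 2) ℂ := Matrix.of fun p q =>
  if p.1 = p.2 then (if p = q then 1 else 0) else
  if q = (0, 1) then 1 else if q = (1, 0) then (if p = (0, 1) then 1 else -1) else 0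

def wQ : Matrix (Fin 2 × Fin 2) (Fin 2 × Fin 2) ℂ := Matrix.of fun p q =>
  if p.1 = p.2 then (if p = q then 1 else 0) else (1 / 2) * wP p q

lemma ptrB2_w : ptrB2 (Matrix.vecMulVec wVec (star wVec)) = wAB := by
  ext ⟨a, b⟩ ⟨c, d⟩
  simp only [ptrB2, Matrix.of_apply, w_entry, wAB]
  fin_cases a <;> fin_cases b <;> fin_cases c <;> fin_cases d <;> simp

lemma ptrB1_w : ptrB1 (Matrix.vecMulVec wVec (star wVec)) = wAB := by
  ext ⟨a, b⟩ ⟨c, d⟩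
  simp only [ptrB1, Matrix.of_apply, w_entry, wAB]
  fin_cases a <;> fin_cases b <;> fin_cases c <;> fin_cases d <;> simp

lemma S_wAB : vnEntropy wAB =
    -((1 / 3 : ℝ) * Real.logb 2 (1 / 3) + (2 / 3 : ℝ) * Real.logb 2 (2 / 3)) := by
  rw [vnEntropy_diag wAB wP wQ
    (fun p => if p = (0, 0) then 1 / 3 else if p = (0, 1) then 2 / 3 else 0)]
  · simp [Fintype.sum_prod_type]
  · ext ⟨a, b⟩ ⟨c, d⟩
    fin_cases a <;> fin_cases b <;> fin_cases c <;> fin_cases d <;> simp [wAB]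
  · ext ⟨a, b⟩ ⟨c, d⟩
    fin_cases a <;> fin_cases b <;> fin_cases c <;> fin_cases d <;>
      simp [wP, wQ, Matrix.mul_apply, Fintype.sum_prod_type] <;> norm_num
  · ext ⟨a, b⟩ ⟨c, d⟩
    fin_cases a <;> fin_cases b <;> fin_cases c <;> fin_cases d <;>
      simp [wP, wQ, wAB, Matrix.mul_apply, Fintype.sum_prod_type, Matrix.diagonal_apply] <;>
      norm_num

lemma QDI_wAB : QDI wAB = 2 / 3 := by
  have p0 : probA wAB 0 = 2 / 3 := by
    simp [probA, wAB]; norm_num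
  have p1 : probA wAB 1 = 1 / 3 := by
    simp [probA, wAB]
  have c0 : vnEntropy (condB wAB 0) = 1 := by
    rw [vnEntropy_diag2 (1 / 2) (1 / 2)]
    · simp [Real.logb_inv]; norm_num
    · ext i j
      simp only [condB, p0]
      fin_cases i <;> fin_cases j <;> simp [wAB] <;> norm_num
  have c1 : vnEntropy (condB wAB 1) = 0 := by
    rw [vnEntropy_diag2 1 0]
    · simp
    · ext i j
      simp only [condB, p1]
      fin_cases i <;> fin_cases j <;> simp [wAB]
  have cA : vnEntropy (ptrB wAB) =
      -((2 / 3 : ℝ) * Real.logb 2 (2 / 3) + (1 / 3 : ℝ) * Real.logb 2 (1 / 3)) := by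
    apply vnEntropy_diag2
    ext i j
    fin_cases i <;> fin_cases j <;> simp [wAB, ptrB] <;> norm_num
  rw [QDI, Fin.sum_univ_two, p0, p1, c0, c1, cA, S_wAB]
  ring

lemma QDI_w : QDI (Matrix.vecMulVec wVec (star wVec)) =
    -((2 / 3 : ℝ) * Real.logb 2 (2 / 3) + (1 / 3 : ℝ) * Real.logb 2 (1 / 3)) := by
  have p0 : probA (Matrix.vecMulVec wVec (star wVec)) 0 = 2 / 3 := by
    simp only [probA, w_entry]
    simp [Fintype.sum_prod_type]; norm_num
  have p1 : probA (Matrix.vecMulVec wVec (star wVec)) 1 = 1 / 3 := by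
    simp only [probA, w_entry]
    simp [Fintype.sum_prod_type]
  have c0 : vnEntropy (condB (Matrix.vecMulVec wVec (star wVec)) 0) = 0 := by
    apply vnEntropy_idem
    ext ⟨a, b⟩ ⟨c, d⟩
    simp only [condB, p0, Matrix.mul_apply, Matrix.smul_apply, Matrix.of_apply, w_entry]
    fin_cases a <;> fin_cases b <;> fin_cases c <;> fin_cases d <;>
      simp [Fintype.sum_prod_type] <;> norm_num
  have c1 : vnEntropy (condB (Matrix.vecMulVec wVec (star wVec)) 1) = 0 := by
    apply vnEntropy_idem
    ext ⟨a, b⟩ ⟨c, d⟩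
    simp only [condB, p1, Matrix.mul_apply, Matrix.smul_apply, Matrix.of_apply, w_entry]
    fin_cases a <;> fin_cases b <;> fin_cases c <;> fin_cases d <;>
      simp [Fintype.sum_prod_type]
  have cA : vnEntropy (ptrB (Matrix.vecMulVec wVec (star wVec))) =
      -((2 / 3 : ℝ) * Real.logb 2 (2 / 3) + (1 / 3 : ℝ) * Real.logb 2 (1 / 3)) := by
    apply vnEntropy_diag2
    ext i j
    simp only [ptrB, Matrix.of_apply, w_entry]
    fin_cases i <;> fin_cases j <;> simp [Fintype.sum_prod_type] <;> norm_num
  have cW : vnEntropy (Matrix.vecMulVec wVec (star wVec)) = 0 := by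
    apply vnEntropy_idem
    ext p q
    simp only [Matrix.mul_apply, w_entry]
    by_cases hp : p = (0, 0, 1) ∨ p = (0, 1, 0) ∨ p = (1, 0, 0) <;>
    by_cases hq : q = (0, 0, 1) ∨ q = (0, 1, 0) ∨ q = (1, 0, 0) <;>
    simp [hp, hq, Fintype.sum_prod_type] <;> norm_num
  rw [QDI, Fin.sum_univ_two, p0, p1, c0, c1, cA, cW]
  ring

/-- for the W state,
`D_{B|A}(ρ_AB) + D_{B'|A}(ρ_AB') − D_{BB'|A}(ρ_ABB') = 2 − log₂3 > 0`. -/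
theorem stmt14 :
    QDI (ptrB2 (Matrix.vecMulVec wVec (star wVec))) +
        QDI (ptrB1 (Matrix.vecMulVec wVec (star wVec))) -
        QDI (Matrix.vecMulVec wVec (star wVec)) = 2 - Real.logb 2 3 ∧
      (0 : ℝ) < 2 - Real.logb 2 3 := by
  constructor
  · rw [ptrB2_w, ptrB1_w, QDI_wAB, QDI_w, Real.logb_div (by norm_num) (by norm_num),
      Real.logb_div (by norm_num) (by norm_num), Real.logb_one,
      Real.logb_self_eq_one (by norm_num)]
    ring
  · have h : Real.logb 2 3 < 2 := by
      rw [Real.logb_lt_iff_lt_rpow (by norm_num) (by norm_num)]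
      norm_num
    linarith
end
end

section
/- Let ρ_AB be a bipartite density matrix on ℂ^{d_A}⊗ℂ^{d_B} and let Λ be a quantum channel on ℂ^{d_A} (given by Kraus operators) that is coherence non-activating, i.e. Δ∘Λ = Δ∘Λ∘Δ as maps on d_A×d_A matrices. Then J(ρ_AB) ≥ J((Λ⊗id_B)(ρ_AB)), where J(σ_AB) = S(σ_B) − Σ_i q_i S(σ_{B|i}) with q_i = tr((|i⟩⟨i|⊗1)σ_AB) and σ_{B|i} = tr_A((|i⟩⟨i|⊗1)σ_AB)/q_i. That is, the incoherent correlation cannot be increased by coherence non-activating operations on A. -/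
open Matrix Kronecker BigOperators
open scoped ComplexOrder

noncomputable section

/-- The incoherent correlation `J(σ_AB) = S(σ_B) − ∑ᵢ qᵢ S(σ_{B|i})`. -/
def Jinc {A B : Type*} [Fintype A] [Fintype B] [DecidableEq A] [DecidableEq B]
    (σ : Matrix (A × B) (A × B) ℂ) : ℝ :=
  vnEntropy (ptrA σ) - ∑ i, probA σ i * vnEntropy (condB σ i)

theorem aux_entropy {n : Type*} [Fintype n] [DecidableEq n] {M : Matrix n n ℂ}
    (h : M.IsHermitian) :
    vnEntropy M = (∑ k, Real.negMulLog (h.eigenvalues k)) / Real.log 2 := by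
  unfold vnEntropy
  rw [dif_pos h, Finset.sum_div, ← Finset.sum_neg_distrib]
  refine Finset.sum_congr rfl fun k _ => ?_
  unfold Real.negMulLog Real.logb
  ring

theorem aux_unitary_row {n : Type*} [Fintype n] [DecidableEq n] (W : Matrix n n ℂ)
    (h : W * Wᴴ = 1) (k : n) : ∑ m, Complex.normSq (W k m) = 1 := by
  have := congrFun (congrFun h k) k
  simp only [Matrix.mul_apply, Matrix.conjTranspose_apply, Matrix.one_apply_eq] at this
  have h2 : ((∑ m, Complex.normSq (W k m) : ℝ) : ℂ) = 1 := by
    rw [← this]; push_cast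
    refine Finset.sum_congr rfl fun m _ => ?_
    exact (Complex.mul_conj _).symm
  exact_mod_cast h2

theorem aux_conj_diag {n m : Type*} [Fintype m] [DecidableEq m] (W : Matrix n m ℂ)
    (d : m → ℂ) (k : n) :
    (W * Matrix.diagonal d * Wᴴ) k k = ∑ i, (Complex.normSq (W k i) : ℂ) * d i := by
  rw [Matrix.mul_apply]
  simp only [Matrix.mul_diagonal, Matrix.conjTranspose_apply]
  refine Finset.sum_congr rfl fun i _ => ?_
  rw [← Complex.mul_conj]; simp only [Complex.star_def]; ring

theorem aux_spec {n : Type*} [Fintype n] [DecidableEq n] {M : Matrix n n ℂ}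
    (h : M.IsHermitian) : M = (h.eigenvectorUnitary : Matrix n n ℂ) *
      Matrix.diagonal (fun i => (h.eigenvalues i : ℂ)) *
        (h.eigenvectorUnitary : Matrix n n ℂ)ᴴ := by
  have := h.spectral_theorem
  rw [Unitary.conjStarAlgAut_apply] at this
  exact this

theorem aux_peierls {n : Type*} [Fintype n] [DecidableEq n] {M : Matrix n n ℂ}
    (h : M.PosSemidef) (U : Matrix n n ℂ) (hU : U * Uᴴ = 1) :
    ∑ k, Real.negMulLog (h.1.eigenvalues k) ≤ ∑ k, Real.negMulLog ((Uᴴ * M * U) k k).re := by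
  have hU' : Uᴴ * U = 1 := mul_eq_one_comm.mp hU
  set V : Matrix n n ℂ := (h.1.eigenvectorUnitary : Matrix n n ℂ) with hV
  have hV1 : V * Vᴴ = 1 := Unitary.mul_star_self_of_mem h.1.eigenvectorUnitary.2
  have hV2 : Vᴴ * V = 1 := mul_eq_one_comm.mp hV1
  set W := Uᴴ * V with hW
  have hW1 : W * Wᴴ = 1 := by
    rw [hW, conjTranspose_mul, conjTranspose_conjTranspose,
      show Uᴴ * V * (Vᴴ * U) = Uᴴ * (V * Vᴴ) * U by simp only [Matrix.mul_assoc],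
      hV1, Matrix.mul_one, hU']
  have hW2 : Wᴴ * W = 1 := mul_eq_one_comm.mp hW1
  have hd : ∀ k, ((Uᴴ * M * U) k k).re = ∑ i, Complex.normSq (W k i) * h.1.eigenvalues i := by
    intro k
    have e : Uᴴ * M * U = W * Matrix.diagonal (fun i => (h.1.eigenvalues i : ℂ)) * Wᴴ := by
      conv_lhs => rw [aux_spec h.1]
      rw [hW, conjTranspose_mul, conjTranspose_conjTranspose, ← hV]
      simp only [Matrix.mul_assoc]
    rw [e, aux_conj_diag]
    have : (∑ i, (Complex.normSq (W k i) : ℂ) * (h.1.eigenvalues i : ℂ))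
      = ((∑ i, Complex.normSq (W k i) * h.1.eigenvalues i : ℝ) : ℂ) := by push_cast; rfl
    rw [this, Complex.ofReal_re]
  have hrow := aux_unitary_row W hW1
  have hcol : ∀ i, ∑ k, Complex.normSq (W k i) = 1 := by
    intro i
    have := aux_unitary_row Wᴴ (by rw [conjTranspose_conjTranspose]; exact hW2) i
    simpa [Matrix.conjTranspose_apply, Complex.normSq_conj] using this
  calc ∑ i, Real.negMulLog (h.1.eigenvalues i)
      = ∑ k, ∑ i, Complex.normSq (W k i) * Real.negMulLog (h.1.eigenvalues i) := by
        rw [Finset.sum_comm]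
        refine Finset.sum_congr rfl fun i _ => ?_
        rw [← Finset.sum_mul, hcol, one_mul]
    _ ≤ _ := by
        refine Finset.sum_le_sum fun k _ => ?_
        rw [hd]
        have := Real.concaveOn_negMulLog.le_map_sum (t := Finset.univ)
          (w := fun i => Complex.normSq (W k i)) (p := h.1.eigenvalues)
          (fun i _ => Complex.normSq_nonneg _) (hrow k)
          (fun i _ => h.eigenvalues_nonneg i)
        simpa [smul_eq_mul] using this

theorem aux_concave {n ι : Type*} [Fintype n] [DecidableEq n] [Fintype ι]
    (w : ι → ℝ) (hw : ∀ i, 0 ≤ w i) (hw1 : ∑ i, w i = 1)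
    (M : ι → Matrix n n ℂ) (hM : ∀ i, (M i).PosSemidef) :
    ∑ i, w i * vnEntropy (M i) ≤ vnEntropy (∑ i, (w i : ℂ) • M i) := by
  have hP : (∑ i, (w i : ℂ) • M i).PosSemidef :=
    Matrix.posSemidef_sum _ fun i _ => (hM i).smul (by exact_mod_cast hw i)
  set N := ∑ i, (w i : ℂ) • M i with hN
  rw [aux_entropy hP.1]
  simp_rw [fun i => aux_entropy (hM i).1]
  simp_rw [← mul_div_assoc]
  rw [← Finset.sum_div]
  refine div_le_div_of_nonneg_right ?_ (Real.log_nonneg (by norm_num))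
  set V : Matrix n n ℂ := (hP.1.eigenvectorUnitary : Matrix n n ℂ) with hV
  have hV1 : V * Vᴴ = 1 := Unitary.mul_star_self_of_mem hP.1.eigenvectorUnitary.2
  have hV2 : Vᴴ * V = 1 := mul_eq_one_comm.mp hV1
  have hdiag : Vᴴ * N * V = Matrix.diagonal (fun i => (hP.1.eigenvalues i : ℂ)) := by
    have e := aux_spec hP.1
    rw [← hV] at e
    calc Vᴴ * N * V = (Vᴴ * V) * Matrix.diagonal (fun i => (hP.1.eigenvalues i : ℂ)) * (Vᴴ * V) := by
          conv_lhs => rw [e]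
          simp only [Matrix.mul_assoc]
      _ = _ := by rw [hV2, Matrix.one_mul, Matrix.mul_one]
  have hev : ∀ k, hP.1.eigenvalues k = ∑ i, w i * ((Vᴴ * M i * V) k k).re := by
    intro k
    have h1 := congrArg Complex.re (congrFun (congrFun hdiag k) k)
    rw [Matrix.diagonal_apply_eq, Complex.ofReal_re] at h1
    rw [← h1, hN, Matrix.mul_sum, Matrix.sum_mul, Matrix.sum_apply, Complex.re_sum]
    refine Finset.sum_congr rfl fun i _ => ?_
    rw [Matrix.mul_smul, Matrix.smul_mul, Matrix.smul_apply, smul_eq_mul, Complex.re_ofReal_mul]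
  calc ∑ i, w i * ∑ k, Real.negMulLog ((hM i).1.eigenvalues k)
      ≤ ∑ i, w i * ∑ k, Real.negMulLog ((Vᴴ * M i * V) k k).re :=
        Finset.sum_le_sum fun i _ => mul_le_mul_of_nonneg_left (aux_peierls (hM i) V hV1) (hw i)
    _ = ∑ k, ∑ i, w i * Real.negMulLog ((Vᴴ * M i * V) k k).re := by
        simp_rw [Finset.mul_sum]; rw [Finset.sum_comm]
    _ ≤ _ := by
        refine Finset.sum_le_sum fun k _ => ?_
        rw [hev]
        have := Real.concaveOn_negMulLog.le_map_sum (t := Finset.univ)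
          (w := w) (p := fun i => ((Vᴴ * M i * V) k k).re)
          (fun i _ => hw i) hw1
          (fun i _ => by
            have := ((hM i).conjTranspose_mul_mul_same V).diag_nonneg (i := k)
            exact (Complex.le_def.mp this).1)
        simpa [smul_eq_mul] using this

/-- The unnormalised conditional block. -/
def auxBlk {A B : Type*} (ρ : Matrix (A × B) (A × B) ℂ) (i : A) : Matrix B B ℂ :=
  Matrix.of fun b b' => ρ (i, b) (i, b')

theorem aux_blk_psd {A B : Type*} {ρ : Matrix (A × B) (A × B) ℂ} (h : ρ.PosSemidef) (i : A) :
    (auxBlk ρ i).PosSemidef := h.submatrix (fun b => (i, b))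

theorem aux_prob {A B : Type*} [Fintype B] {ρ : Matrix (A × B) (A × B) ℂ} (h : ρ.PosSemidef)
    (i : A) : 0 ≤ probA ρ i ∧ ((probA ρ i : ℝ) : ℂ) = (auxBlk ρ i).trace := by
  have h0 : 0 ≤ (auxBlk ρ i).trace := (aux_blk_psd h i).trace_nonneg
  have h1 := Complex.le_def.mp h0
  have e : probA ρ i = (auxBlk ρ i).trace.re := rfl
  refine ⟨e ▸ h1.1, ?_⟩
  rw [e]
  apply Complex.ext
  · simp
  · simpa using h1.2

theorem aux_prob_cond {A B : Type*} [Fintype B] {ρ : Matrix (A × B) (A × B) ℂ}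
    (h : ρ.PosSemidef) (i : A) : ((probA ρ i : ℝ) : ℂ) • condB ρ i = auxBlk ρ i := by
  change ((probA ρ i : ℝ) : ℂ) • (((probA ρ i : ℝ) : ℂ)⁻¹ • auxBlk ρ i) = _
  by_cases hp : ((probA ρ i : ℝ) : ℂ) = 0
  · have : auxBlk ρ i = 0 := (aux_blk_psd h i).trace_eq_zero_iff.mp ((aux_prob h i).2 ▸ hp)
    simp [this]
  · rw [smul_smul, mul_inv_cancel₀ hp, one_smul]

theorem aux_cond_psd {A B : Type*} [Fintype B] {ρ : Matrix (A × B) (A × B) ℂ}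
    (h : ρ.PosSemidef) (i : A) : (condB ρ i).PosSemidef := by
  change (((probA ρ i : ℝ) : ℂ)⁻¹ • auxBlk ρ i).PosSemidef
  refine (aux_blk_psd h i).smul ?_
  rw [← Complex.ofReal_inv]
  exact_mod_cast inv_nonneg.mpr (aux_prob h i).1

theorem aux_main {A B : Type*} [Fintype A] [Fintype B] [DecidableEq A] [DecidableEq B]
    (ρ σ : Matrix (A × B) (A × B) ℂ) (hρ : ρ.PosSemidef) (T : A → A → ℝ)
    (hT : ∀ j i, 0 ≤ T j i) (hT1 : ∀ i, ∑ j, T j i = 1)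
    (hblk : ∀ j, auxBlk σ j = ∑ i, (T j i : ℂ) • auxBlk ρ i)
    (hB : ptrA σ = ptrA ρ) : Jinc σ ≤ Jinc ρ := by
  unfold Jinc
  rw [hB]
  refine sub_le_sub_left ?_ _
  have hq : ∀ j, probA σ j = ∑ i, T j i * probA ρ i := by
    intro j
    have e : probA σ j = (auxBlk σ j).trace.re := rfl
    rw [e, hblk, Matrix.trace_sum, Complex.re_sum]
    refine Finset.sum_congr rfl fun i _ => ?_
    rw [Matrix.trace_smul, smul_eq_mul, Complex.re_ofReal_mul]
    rfl
  have hterm : ∀ j i, 0 ≤ T j i * probA ρ i := fun j i => mul_nonneg (hT j i) (aux_prob hρ i).1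
  calc ∑ i, probA ρ i * vnEntropy (condB ρ i)
      = ∑ j, ∑ i, T j i * probA ρ i * vnEntropy (condB ρ i) := by
        rw [Finset.sum_comm]
        refine Finset.sum_congr rfl fun i _ => ?_
        simp_rw [mul_assoc]
        rw [← Finset.sum_mul, hT1, one_mul]
    _ ≤ _ := by
        refine Finset.sum_le_sum fun j _ => ?_
        by_cases hz : probA σ j = 0
        · have h0 : ∀ i, T j i * probA ρ i = 0 := fun i =>
            (Finset.sum_eq_zero_iff_of_nonneg (fun i _ => hterm j i)).mp ((hq j) ▸ hz) i
              (Finset.mem_univ i)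
          simp [h0, hz]
        · have hpos : 0 < probA σ j :=
            lt_of_le_of_ne (hq j ▸ Finset.sum_nonneg fun i _ => hterm j i) (Ne.symm hz)
          have hc := aux_concave (fun i => T j i * probA ρ i / probA σ j)
            (fun i => div_nonneg (hterm j i) hpos.le)
            (by rw [← Finset.sum_div, ← hq, div_self hz]) (condB ρ) (aux_cond_psd hρ)
          have e : (∑ i, ((T j i * probA ρ i / probA σ j : ℝ) : ℂ) • condB ρ i) = condB σ j := by
            change _ = ((probA σ j : ℝ) : ℂ)⁻¹ • auxBlk σ j
            rw [hblk, Finset.smul_sum]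
            refine Finset.sum_congr rfl fun i _ => ?_
            rw [← aux_prob_cond hρ i, smul_smul, smul_smul]
            congr 1
            push_cast
            ring
          rw [e] at hc
          calc ∑ i, T j i * probA ρ i * vnEntropy (condB ρ i)
              = probA σ j * ∑ i, T j i * probA ρ i / probA σ j * vnEntropy (condB ρ i) := by
                rw [Finset.mul_sum]
                refine Finset.sum_congr rfl fun i _ => ?_
                field_simp
            _ ≤ _ := mul_le_mul_of_nonneg_left hc hpos.le

theorem aux_kron {A B : Type*} [Fintype A] [Fintype B] [DecidableEq A] [DecidableEq B]
    (K : Matrix A A ℂ) (ρ : Matrix (A × B) (A × B) ℂ) (j j' : A) (b b' : B) :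
    ((K ⊗ₖ (1 : Matrix B B ℂ)) * ρ * (K ⊗ₖ (1 : Matrix B B ℂ))ᴴ) (j, b) (j', b')
      = (K * (Matrix.of fun i i' => ρ (i, b) (i', b')) * Kᴴ) j j' := by
  simp [Matrix.mul_apply, Fintype.sum_prod_type, Matrix.one_apply,
    Matrix.conjTranspose_apply, apply_ite]


/-- the incoherent correlation cannot be increased by a coherence
non-activating channel (`Δ∘Λ = Δ∘Λ∘Δ`) acting on `A`. -/
theorem stmt16 {dA dB L : ℕ}
    (ρ : Matrix (Fin dA × Fin dB) (Fin dA × Fin dB) ℂ) (hρ : IsDensityMatrix ρ)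
    (K : Fin L → Matrix (Fin dA) (Fin dA) ℂ)
    (hK : ∑ l, (K l)ᴴ * K l = 1)
    (hCNA : ∀ M : Matrix (Fin dA) (Fin dA) ℂ,
      deph (∑ l, K l * M * (K l)ᴴ) = deph (∑ l, K l * deph M * (K l)ᴴ)) :
    Jinc (∑ l, (K l ⊗ₖ (1 : Matrix (Fin dB) (Fin dB) ℂ)) * ρ *
        (K l ⊗ₖ (1 : Matrix (Fin dB) (Fin dB) ℂ))ᴴ) ≤ Jinc ρ := by
  have hσ : ∀ j j' b b', (∑ l, (K l ⊗ₖ (1 : Matrix (Fin dB) (Fin dB) ℂ)) * ρ *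
        (K l ⊗ₖ (1 : Matrix (Fin dB) (Fin dB) ℂ))ᴴ) (j, b) (j', b')
      = (∑ l, K l * (Matrix.of fun i i' => ρ (i, b) (i', b')) * (K l)ᴴ) j j' := by
    intro j j' b b'
    rw [Matrix.sum_apply, Matrix.sum_apply]
    exact Finset.sum_congr rfl fun l _ => aux_kron _ _ _ _ _ _
  refine aux_main ρ _ hρ.1 (fun j i => ∑ l, Complex.normSq (K l j i))
    (fun j i => Finset.sum_nonneg fun l _ => Complex.normSq_nonneg _) ?_ ?_ ?_
  · intro i
    have h1 := congrFun (congrFun hK i) i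
    rw [Matrix.sum_apply, Matrix.one_apply_eq] at h1
    have h2 : ((∑ j, ∑ l, Complex.normSq (K l j i) : ℝ) : ℂ) = 1 := by
      rw [← h1, Finset.sum_comm]
      push_cast
      refine Finset.sum_congr rfl fun l _ => ?_
      rw [Matrix.mul_apply]
      refine Finset.sum_congr rfl fun j _ => ?_
      rw [← Complex.mul_conj, mul_comm, Matrix.conjTranspose_apply]
      rfl
    exact_mod_cast h2
  · intro j
    ext b b'
    have h1 := congrFun (congrFun (hCNA (Matrix.of fun i i' => ρ (i, b) (i', b'))) j) j
    simp only [deph, Matrix.of_apply, if_true] at h1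
    change (∑ l, (K l ⊗ₖ (1 : Matrix (Fin dB) (Fin dB) ℂ)) * ρ *
        (K l ⊗ₖ (1 : Matrix (Fin dB) (Fin dB) ℂ))ᴴ) (j, b) (j, b') = _
    rw [hσ, h1]
    have e : (Matrix.of fun i i' => if i = i' then ρ (i, b) (i', b') else 0)
        = Matrix.diagonal (fun i => ρ (i, b) (i, b')) := by
      ext i i'
      by_cases h : i = i'
      · subst h; simp
      · simp [h]
    rw [e, Matrix.sum_apply, Matrix.sum_apply]
    simp_rw [aux_conj_diag]
    rw [Finset.sum_comm]
    refine Finset.sum_congr rfl fun i _ => ?_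
    rw [Matrix.smul_apply, smul_eq_mul, ← Finset.sum_mul]
    push_cast
    rfl
  · ext b b'
    simp only [ptrA, Matrix.of_apply]
    simp_rw [hσ]
    change Matrix.trace (∑ l, K l * (Matrix.of fun i i' => ρ (i, b) (i', b')) * (K l)ᴴ) = Matrix.trace (Matrix.of fun i i' => ρ (i, b) (i', b'))
    rw [Matrix.trace_sum]
    simp_rw [fun l => Matrix.trace_mul_cycle (K l) (Matrix.of fun i i' => ρ (i, b) (i', b')) (K l)ᴴ]
    rw [← Matrix.trace_sum, ← Matrix.sum_mul, hK, Matrix.one_mul]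
end
end
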